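/- arXiv:1609.02301 — 7 statements merged into one kernel-verified Lean document; each statement's English description precedes it below -/
import Mathlib

section
/- For every real s with 0 < s < 1, the value ζ(s) is real and strictly negative; that is, Im(ζ(s)) = 0 and Re(ζ(s)) < 0. -/
noncomputable def etaTerm (n : ℕ) (s : ℂ) : ℂ :=
  1 / ((2 * n + 1 : ℕ) : ℂ) ^ s - 1 / ((2 * n + 2 : ℕ) : ℂ) ^ s

lemma etaTerm_bound (n : ℕ) (s : ℂ) (hs : 0 < s.re) :
    ‖etaTerm n s‖ ≤ ‖s‖ * ((2 * n + 1 : ℕ) : ℝ) ^ (-s.re - 1) := by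
  have hs0 : -s ≠ 0 := by
    intro h
    have := congrArg Complex.re h
    simp at this
    linarith
  have hpos : ∀ x ∈ Set.Icc (((2 * n + 1 : ℕ) : ℝ)) ((2 * n + 2 : ℕ) : ℝ), 0 < x := by
    intro x hx
    exact lt_of_lt_of_le (by positivity) hx.1
  have key := norm_image_sub_le_of_norm_deriv_le_segment' (a := ((2 * n + 1 : ℕ) : ℝ))
    (b := ((2 * n + 2 : ℕ) : ℝ)) (f := fun x : ℝ => (x : ℂ) ^ (-s))
    (f' := fun x : ℝ => (-s) * (x : ℂ) ^ (-s - 1))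
    (C := ‖s‖ * ((2 * n + 1 : ℕ) : ℝ) ^ (-s.re - 1)) ?_ ?_ ((2 * n + 2 : ℕ) : ℝ) ?_
  · rw [etaTerm, norm_sub_rev]
    have e : (((2 * n + 2 : ℕ) : ℝ)) - ((2 * n + 1 : ℕ) : ℝ) = 1 := by push_cast; ring
    rw [e, mul_one] at key
    simpa [Complex.cpow_neg] using key
  · intro x hx
    exact (hasDerivAt_ofReal_cpow_const (hpos x hx).ne' hs0).hasDerivWithinAt
  · intro x hx
    have hx' := hpos x ⟨hx.1, hx.2.le⟩
    rw [norm_mul, norm_neg, Complex.norm_cpow_eq_rpow_re_of_pos hx']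
    refine mul_le_mul_of_nonneg_left ?_ (norm_nonneg _)
    simp only [Complex.sub_re, Complex.neg_re, Complex.one_re]
    exact Real.rpow_le_rpow_of_nonpos (by positivity) hx.1 (by linarith)
  · constructor <;> push_cast <;> linarith

lemma eta_summable_bound (R d : ℝ) (hd : 0 < d) :
    Summable (fun n : ℕ => R * ((2 * n + 1 : ℕ) : ℝ) ^ (-d - 1)) := by
  apply Summable.mul_left
  have h : Summable (fun n : ℕ => (n : ℝ) ^ (-d - 1)) :=
    Real.summable_nat_rpow.2 (by linarith)
  exact h.comp_injective (i := fun n : ℕ => 2 * n + 1) (fun a b h => by simpa using h)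

lemma eta_differentiableAt (s : ℂ) (hs : 0 < s.re) :
    DifferentiableAt ℂ (fun z => ∑' n, etaTerm n z) s := by
  have hU : IsOpen {z : ℂ | s.re / 2 < z.re ∧ ‖z‖ < ‖s‖ + 1} :=
    (isOpen_lt continuous_const Complex.continuous_re).inter
      (isOpen_lt continuous_norm continuous_const)
  have := Complex.differentiableOn_tsum_of_summable_norm (F := etaTerm)
    (eta_summable_bound (‖s‖ + 1) (s.re / 2) (by linarith)) (fun n z hz => ?_) hU
    (fun n z hz => ?_)
  · exact this.differentiableAt (hU.mem_nhds ⟨by linarith, by linarith⟩)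
  · apply DifferentiableAt.differentiableWithinAt
    unfold etaTerm
    simp only [one_div, ← Complex.cpow_neg]
    refine DifferentiableAt.sub ?_ ?_ <;>
    exact differentiableAt_id.neg.const_cpow (Or.inl (by norm_cast))
  · refine (etaTerm_bound n z (by linarith [hz.1])).trans ?_
    have h1 := hz.1
    gcongr
    · exact hz.2.le
    · norm_cast; omega

lemma eta_eq_of_one_lt (s : ℂ) (hs : 1 < s.re) :
    ∑' n, etaTerm n s = (1 - 2 * (2 : ℂ) ^ (-s)) * riemannZeta s := by
  have hz := zeta_eq_tsum_one_div_nat_add_one_cpow hs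
  have hsum : Summable (fun n : ℕ => 1 / ((n : ℂ) + 1) ^ s) := by
    have := (summable_nat_add_iff 1).2 (Complex.summable_one_div_nat_cpow.2 hs)
    simpa using this
  obtain ⟨f, hf⟩ : ∃ f : ℕ → ℂ, ∀ n, f n = 1 / ((n : ℂ) + 1) ^ s := ⟨_, fun _ => rfl⟩
  simp only [← hf] at hz hsum
  have hE : Summable (fun n : ℕ => f (2 * n)) :=
    hsum.comp_injective (i := fun n : ℕ => 2 * n) (fun a b h => by simpa using h)
  have hO : Summable (fun n : ℕ => f (2 * n + 1)) :=
    hsum.comp_injective (i := fun n : ℕ => 2 * n + 1) (fun a b h => by simpa using h)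
  have h := tsum_even_add_odd hE hO
  have hO' : ∑' n : ℕ, f (2 * n + 1) = (2 : ℂ) ^ (-s) * riemannZeta s := by
    rw [hz, ← tsum_mul_left]
    refine tsum_congr fun n => ?_
    have : (((2 * n + 1 : ℕ) : ℂ) + 1) ^ s = 2 ^ s * ((n : ℂ) + 1) ^ s := by
      have := Complex.natCast_mul_natCast_cpow 2 (n + 1) s
      have e : (((2 * n + 1 : ℕ) : ℂ) + 1) = ((2 : ℕ) : ℂ) * ((n + 1 : ℕ) : ℂ) := by
        push_cast
        ring
      rw [e, this]
      push_cast
      rfl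
    rw [hf, hf, this, Complex.cpow_neg, one_div, one_div, mul_inv]
  have hsub := hE.tsum_sub hO
  have : ∑' n, etaTerm n s = ∑' n : ℕ, (f (2 * n) - f (2 * n + 1)) := by
    refine tsum_congr fun n => ?_
    have e1 : ((2 * n + 1 : ℕ) : ℂ) = ((2 * n : ℕ) : ℂ) + 1 := by push_cast; ring
    have e2 : ((2 * n + 2 : ℕ) : ℂ) = ((2 * n + 1 : ℕ) : ℂ) + 1 := by push_cast; ring
    rw [etaTerm, hf, hf, e2, e1]
  rw [← hz] at h
  rw [this, hsub, eq_sub_of_add_eq h, hO']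
  ring

lemma eta_eq (s : ℂ) (hs : 0 < s.re) :
    (s - 1) * ∑' n, etaTerm n s = (1 - 2 * (2 : ℂ) ^ (-s)) * riemannZeta₁ s := by
  have hU : IsOpen {z : ℂ | 0 < z.re} := isOpen_lt continuous_const Complex.continuous_re
  have hA : AnalyticOnNhd ℂ (fun s => (s - 1) * ∑' n, etaTerm n s) {z : ℂ | 0 < z.re} := by
    refine DifferentiableOn.analyticOnNhd (fun z hz => ?_) hU
    exact ((differentiableAt_id.sub_const 1).mul
      (eta_differentiableAt z hz)).differentiableWithinAt
  have hB : AnalyticOnNhd ℂ (fun s => (1 - 2 * (2 : ℂ) ^ (-s)) * riemannZeta₁ s)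
      {z : ℂ | 0 < z.re} := by
    refine DifferentiableOn.analyticOnNhd (fun z hz => ?_) hU
    refine DifferentiableAt.differentiableWithinAt ?_
    refine DifferentiableAt.mul ?_ (differentiable_riemannZeta₁ z)
    exact ((differentiableAt_id.neg.const_cpow (Or.inl (by norm_num))).const_mul 2).const_sub 1
  refine hA.eqOn_of_preconnected_of_eventuallyEq hB
    (convex_halfSpace_re_gt 0).isPreconnected (z₀ := 2) (by simp) ?_ hs
  have hV : IsOpen {z : ℂ | 1 < z.re} := isOpen_lt continuous_const Complex.continuous_re
  filter_upwards [hV.mem_nhds (show (2 : ℂ) ∈ {z : ℂ | 1 < z.re} by simp)] with z hz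
  have hz1 : z ≠ 1 := by
    rintro rfl
    simp at hz
  have : z - 1 ≠ 0 := sub_ne_zero.2 hz1
  rw [eta_eq_of_one_lt z hz, riemannZeta_eq_inv_sub_mul hz1]
  field_simp

/-- For real `0 < s < 1`, `ζ(s)` is real and strictly negative. -/
theorem riemannZeta_real_neg_of_mem_unit_interval (s : ℝ) (h0 : 0 < s) (h1 : s < 1) :
    (riemannZeta s).im = 0 ∧ (riemannZeta s).re < 0 := by
  have him : (riemannZeta s).im = 0 := by
    have := riemannZeta_conj s
    rw [Complex.conj_ofReal] at this
    exact Complex.conj_eq_iff_im.1 this.symm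
  refine ⟨him, ?_⟩
  have hs1 : (s : ℂ) ≠ 1 := by exact_mod_cast h1.ne
  have hne : (s : ℂ) - 1 ≠ 0 := sub_ne_zero.2 hs1
  have h := eta_eq s (by simpa using h0)
  have h2 : ∑' n, etaTerm n s = (1 - 2 * (2 : ℂ) ^ (-(s : ℂ))) * riemannZeta s := by
    rw [riemannZeta_eq_inv_sub_mul hs1]
    apply mul_left_cancel₀ hne
    rw [h]
    field_simp
  have hterm : ∀ n, etaTerm n s =
      ((1 / ((2 * n + 1 : ℕ) : ℝ) ^ s - 1 / ((2 * n + 2 : ℕ) : ℝ) ^ s : ℝ) : ℂ) := by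
    intro n
    rw [etaTerm, Complex.ofReal_sub, Complex.ofReal_div, Complex.ofReal_div,
      Complex.ofReal_cpow (by positivity), Complex.ofReal_cpow (by positivity)]
    simp
  have hpos : ∀ n : ℕ,
      0 < (1 / ((2 * n + 1 : ℕ) : ℝ) ^ s - 1 / ((2 * n + 2 : ℕ) : ℝ) ^ s : ℝ) := by
    intro n
    rw [sub_pos]
    apply one_div_lt_one_div_of_lt (by positivity)
    apply Real.rpow_lt_rpow (by positivity) _ h0
    norm_cast
    omega
  have hsumC : Summable (fun n => etaTerm n s) :=
    Summable.of_norm_bounded (eta_summable_bound ‖(s : ℂ)‖ s h0)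
      (fun n => by simpa using etaTerm_bound n s (by simpa using h0))
  simp only [hterm] at hsumC h2
  have hsumR := Complex.summable_ofReal.1 hsumC
  have hP := hsumR.tsum_pos (fun n => (hpos n).le) 0 (hpos 0)
  rw [← Complex.ofReal_tsum] at h2
  have hc : (1 - 2 * (2 : ℂ) ^ (-(s : ℂ))) = ((1 - 2 * (2 : ℝ) ^ (-s) : ℝ) : ℂ) := by
    push_cast
    rw [Complex.ofReal_cpow (by norm_num)]
    simp
  rw [hc] at h2
  have h3 := congrArg Complex.re h2
  rw [Complex.re_ofReal_mul, Complex.ofReal_re] at h3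
  have hneg : 1 - 2 * (2 : ℝ) ^ (-s) < 0 := by
    have : (2 : ℝ) ^ (-1 : ℝ) < (2 : ℝ) ^ (-s) :=
      Real.rpow_lt_rpow_of_exponent_lt (by norm_num) (by linarith)
    rw [Real.rpow_neg_one] at this
    linarith
  rw [h3] at hP
  by_contra hcon
  push Not at hcon
  nlinarith
end

section
/- For every real s > 1, log ζ(s) = s · ∫_1^∞ Π(x) · x^{−s−1} dx, where log denotes the real logarithm of the positive real ζ(s). -/
/-- The prime counting function: the number of primes `≤ x`. -/
noncomputable def primePi (x : ℝ) : ℕ := Nat.primeCounting ⌊x⌋₊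

/-- Riemann's weighted prime-power counting function
`Π(x) = ∑_{n ≥ 1} (1/n) π(x^(1/n))`. -/
noncomputable def riemannPi (x : ℝ) : ℝ :=
  ∑' n : ℕ, (1 / ((n : ℝ) + 1)) * primePi (x ^ (1 / ((n : ℝ) + 1)))

lemma primePi_eq_tsum (y : ℝ) (hy : 0 ≤ y) :
    (primePi y : ℝ) = ∑' p : Nat.Primes, if ((p : ℕ) : ℝ) ≤ y then (1 : ℝ) else 0 := by
  have h := tsum_subtype {n : ℕ | n.Prime} (fun n : ℕ => if (n : ℝ) ≤ y then (1 : ℝ) else 0)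
  refine Eq.trans ?_ h.symm
  rw [tsum_eq_sum (s := Nat.primesLE ⌊y⌋₊)]
  · rw [primePi, ← Nat.primesLE_card_eq_primeCounting, Finset.card_eq_sum_ones, Nat.cast_sum]
    refine Finset.sum_congr rfl fun p hp => ?_
    rw [Nat.mem_primesLE] at hp
    have h1 : (p : ℝ) ≤ y := (Nat.le_floor_iff hy).1 hp.1
    rw [Set.indicator_of_mem (by exact hp.2), if_pos h1, Nat.cast_one]
  · intro p hp
    rw [Nat.mem_primesLE, Nat.le_floor_iff hy] at hp
    by_cases h2 : p.Prime
    · rw [Set.indicator_of_mem (by exact h2), if_neg (fun h3 => hp ⟨h3, h2⟩)]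
    · rw [Set.indicator_of_notMem (by exact h2)]

noncomputable def rpF (s : ℝ) (i : Nat.Primes × ℕ) (x : ℝ) : ℝ :=
  (1 / ((i.2 : ℝ) + 1)) *
    (Set.Ici (((i.1 : ℕ) : ℝ) ^ (i.2 + 1))).indicator (fun x : ℝ => x ^ (-s - 1)) x

lemma rpF_tsum (s x : ℝ) (hx : 1 < x) :
    ∑' i, rpF s i x = riemannPi x * x ^ (-s - 1) := by
  have hx0 : 0 ≤ x := by linarith
  have hsum : Summable (fun i => rpF s i x) := by
    apply summable_of_hasFiniteSupport
    have hinj : Function.Injective (fun i : Nat.Primes × ℕ => ((i.1 : ℕ), i.2)) := by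
      rintro ⟨a, b⟩ ⟨c, d⟩ h
      simp only [Prod.mk.injEq] at h
      exact Prod.ext (Subtype.ext h.1) h.2
    refine Set.Finite.subset (Set.Finite.preimage hinj.injOn
      (((Set.finite_Iic ⌊x⌋₊).prod (Set.finite_Iic ⌊x⌋₊)))) ?_
    rintro ⟨p, n⟩ hi
    have hmem : x ∈ Set.Ici (((p : ℕ) : ℝ) ^ (n + 1)) := by
      by_contra hc
      apply hi
      simp only [rpF]
      rw [Set.indicator_of_notMem hc, mul_zero]
    have h1 : (p : ℕ) ^ (n + 1) ≤ ⌊x⌋₊ := by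
      rw [Nat.le_floor_iff hx0]
      exact_mod_cast hmem
    have h2 : (p : ℕ) ≤ (p : ℕ) ^ (n + 1) := Nat.le_self_pow (by omega) _
    have h3 : n + 1 < (p : ℕ) ^ (n + 1) := Nat.lt_pow_self p.2.one_lt
    simp only [Set.mem_preimage, Set.mem_prod, Set.mem_Iic]
    omega
  rw [hsum.tsum_prod, ← Summable.tsum_comm (f := fun p n => rpF s (p, n) x) hsum, riemannPi,
    ← tsum_mul_right]
  refine tsum_congr fun n => ?_
  have hn : (0 : ℝ) < (n : ℝ) + 1 := by positivity
  rw [primePi_eq_tsum _ (by positivity), ← tsum_mul_left, ← tsum_mul_right]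
  refine tsum_congr fun p => ?_
  have hiff : ((p : ℕ) : ℝ) ^ (n + 1) ≤ x ↔ ((p : ℕ) : ℝ) ≤ x ^ (1 / ((n : ℝ) + 1)) := by
    rw [one_div, Real.le_rpow_inv_iff_of_pos (by positivity) hx0 hn, ← Real.rpow_natCast]
    push_cast
    rfl
  simp only [rpF, Set.indicator, Set.mem_Ici, hiff]
  split_ifs <;> simp

lemma rpF_integrable (s : ℝ) (hs : 1 < s) (i : Nat.Primes × ℕ) :
    MeasureTheory.Integrable (rpF s i) (MeasureTheory.volume.restrict (Set.Ioi (1 : ℝ))) := by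
  refine MeasureTheory.Integrable.const_mul ?_ _
  exact (integrableOn_Ioi_rpow_of_lt (by linarith) one_pos).indicator measurableSet_Ici

lemma rpF_integral (s : ℝ) (hs : 1 < s) (i : Nat.Primes × ℕ) :
    ∫ x in Set.Ioi (1 : ℝ), rpF s i x =
      (((i.1 : ℕ) : ℝ) ^ (-s)) ^ (i.2 + 1) / ((i.2 : ℝ) + 1) / s := by
  obtain ⟨p, n⟩ := i
  have hp : (0 : ℝ) < ((p : ℕ) : ℝ) := by exact_mod_cast p.2.pos
  have hp1 : (1 : ℝ) < ((p : ℕ) : ℝ) ^ (n + 1) :=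
    one_lt_pow₀ (by exact_mod_cast p.2.one_lt) (by omega)
  have hset : Set.Ioi (1 : ℝ) ∩ Set.Ici (((p : ℕ) : ℝ) ^ (n + 1)) =
      Set.Ici (((p : ℕ) : ℝ) ^ (n + 1)) :=
    Set.inter_eq_right.2 (fun y hy => lt_of_lt_of_le hp1 hy)
  simp only [rpF]
  rw [MeasureTheory.integral_const_mul, MeasureTheory.setIntegral_indicator measurableSet_Ici,
    hset,
    MeasureTheory.integral_Ici_eq_integral_Ioi, integral_Ioi_rpow_of_lt (by linarith) (by positivity)]
  have e : (((p : ℕ) : ℝ) ^ (n + 1)) ^ (-s - 1 + 1) = (((p : ℕ) : ℝ) ^ (-s)) ^ (n + 1) := by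
    rw [sub_add_cancel, ← Real.rpow_natCast, ← Real.rpow_natCast, ← Real.rpow_mul hp.le,
      ← Real.rpow_mul hp.le, mul_comm]
  rw [e]
  have : s ≠ 0 := by linarith
  have : (n : ℝ) + 1 ≠ 0 := by positivity
  field_simp
  ring_nf
  try field_simp

lemma zeta_log (s : ℝ) (hs : 1 < s) :
    Summable (fun p : Nat.Primes => -Real.log (1 - ((p : ℕ) : ℝ) ^ (-s))) ∧
    Real.log (∑' n : ℕ, ((n : ℝ) + 1) ^ (-s)) =
      ∑' p : Nat.Primes, -Real.log (1 - ((p : ℕ) : ℝ) ^ (-s)) := by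
  let f : ℕ →*₀ ℝ :=
    { toFun := fun n => (n : ℝ) ^ (-s)
      map_zero' := by
        rw [Nat.cast_zero, Real.zero_rpow (by linarith)]
      map_one' := by simp
      map_mul' := fun m n => by
        rw [Nat.cast_mul, Real.mul_rpow (by positivity) (by positivity)] }
  have hf : ∀ n : ℕ, f n = (n : ℝ) ^ (-s) := fun n => rfl
  have hsum : Summable (fun n : ℕ => (n : ℝ) ^ (-s)) := Real.summable_nat_rpow.2 (by linarith)
  have hprod := EulerProduct.eulerProduct_completely_multiplicative_hasProd (f := f) hsum.norm
  have hps : Summable (fun p : Nat.Primes => -((p : ℕ) : ℝ) ^ (-s)) :=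
    (hsum.comp_injective Subtype.val_injective).neg
  have hlog : Summable (fun p : Nat.Primes => -Real.log (1 - ((p : ℕ) : ℝ) ^ (-s))) := by
    simpa only [sub_eq_add_neg] using (Real.summable_log_one_add_of_summable hps).neg
  refine ⟨hlog, ?_⟩
  have h2 := hlog.hasSum.rexp
  have h3 : (Real.exp ∘ fun p : Nat.Primes => -Real.log (1 - ((p : ℕ) : ℝ) ^ (-s))) =
      fun p : Nat.Primes => (1 - f p)⁻¹ := by
    funext p
    have : ((p : ℕ) : ℝ) ^ (-s) < 1 :=
      Real.rpow_lt_one_of_one_lt_of_neg (by exact_mod_cast p.2.one_lt) (by linarith)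
    simp only [Function.comp, hf]
    rw [Real.exp_neg, Real.exp_log (by linarith)]
  rw [h3] at h2
  have h4 := hprod.unique h2
  have h5 : ∑' n, f n = ∑' n : ℕ, ((n : ℝ) + 1) ^ (-s) := by
    have := hsum.tsum_eq_zero_add
    simp only [hf]
    rw [this, Nat.cast_zero, Real.zero_rpow (by linarith), zero_add]
    push_cast
    rfl
  rw [← h5, h4, Real.log_exp]

/-- For real `s > 1`, `log ζ(s) = s ∫_1^∞ Π(x) x^(-s-1) dx`, where `ζ(s)` is the
convergent series `∑ n^(-s)`. -/
theorem log_zeta_eq_integral_riemannPi (s : ℝ) (hs : 1 < s) :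
    Real.log (∑' n : ℕ, ((n : ℝ) + 1) ^ (-s)) =
      s * ∫ x in Set.Ioi (1 : ℝ), riemannPi x * x ^ (-s - 1) := by
  obtain ⟨hlog, hz⟩ := zeta_log s hs
  have hT : ∀ p : Nat.Primes, HasSum (fun n : ℕ => (((p : ℕ) : ℝ) ^ (-s)) ^ (n + 1) / ((n : ℝ) + 1))
      (-Real.log (1 - ((p : ℕ) : ℝ) ^ (-s))) := fun p => by
    apply Real.hasSum_pow_div_log_of_abs_lt_one
    rw [abs_of_nonneg (by positivity)]
    exact Real.rpow_lt_one_of_one_lt_of_neg (by exact_mod_cast p.2.one_lt) (by linarith)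
  have hS : Summable (fun i : Nat.Primes × ℕ =>
      (((i.1 : ℕ) : ℝ) ^ (-s)) ^ (i.2 + 1) / ((i.2 : ℝ) + 1)) := by
    refine (summable_prod_of_nonneg (fun i => by positivity)).2 ⟨fun p => (hT p).summable, ?_⟩
    exact hlog.congr fun p => (hT p).tsum_eq.symm
  have hI := MeasureTheory.hasSum_integral_of_summable_integral_norm (F := rpF s)
    (rpF_integrable s hs) (by
      refine (hS.div_const s).congr fun i => ?_
      rw [← rpF_integral s hs i]
      refine MeasureTheory.setIntegral_congr_fun measurableSet_Ioi fun x hx => ?_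
      have hx : (1 : ℝ) < x := hx
      refine (Real.norm_of_nonneg ?_).symm
      refine mul_nonneg (by positivity) (Set.indicator_apply_nonneg fun _ => ?_)
      exact Real.rpow_nonneg (by linarith) _)
  have hR : ∫ x in Set.Ioi (1 : ℝ), riemannPi x * x ^ (-s - 1) =
      ∫ x in Set.Ioi (1 : ℝ), ∑' i, rpF s i x :=
    MeasureTheory.setIntegral_congr_fun measurableSet_Ioi fun x hx => (rpF_tsum s x hx).symm
  rw [hR, ← hI.tsum_eq, hz]
  simp only [rpF_integral s hs]
  rw [tsum_div_const, mul_div_cancel₀ _ (by linarith), hS.tsum_prod]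
  exact tsum_congr fun p => (hT p).tsum_eq.symm
end

section
/- For every real s > 1, (log ζ(s))/s = ∫_2^∞ π(x) / (x (x^s − 1)) dx, where log denotes the real logarithm of the positive real ζ(s). -/
/-- The completely multiplicative map `n ↦ n^(-s)`. -/
noncomputable def auxHom (s : ℝ) (hs : 1 < s) : ℕ →*₀ ℝ where
  toFun n := (n : ℝ) ^ (-s)
  map_zero' := by
    rw [Nat.cast_zero, Real.zero_rpow]; linarith
  map_one' := by simp
  map_mul' m n := by
    rw [Nat.cast_mul, Real.mul_rpow m.cast_nonneg n.cast_nonneg]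

lemma aux_lt_one {s x : ℝ} (hs : 1 < s) (hx : 1 < x) : x ^ (-s) < 1 :=
  Real.rpow_lt_one_of_one_lt_of_neg hx (by linarith)

lemma aux_summable {s : ℝ} (hs : 1 < s) : Summable (fun n : ℕ => (n : ℝ) ^ (-s)) :=
  Real.summable_nat_rpow.mpr (by linarith)

lemma aux_summable_log {s : ℝ} (hs : 1 < s) :
    Summable (fun p : Nat.Primes => Real.log (1 - (p : ℝ) ^ (-s))) := by
  have h1 : Summable (fun p : Nat.Primes => -((p : ℕ) : ℝ) ^ (-s)) :=
    ((aux_summable hs).comp_injective Subtype.val_injective).neg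
  simpa [sub_eq_add_neg] using Real.summable_log_one_add_of_summable h1

lemma aux_one_lt (p : Nat.Primes) : (1 : ℝ) < ((p : ℕ) : ℝ) := by
  exact_mod_cast p.2.one_lt

lemma aux_log_zeta {s : ℝ} (hs : 1 < s) :
    Real.log (∑' n : ℕ, ((n : ℝ) + 1) ^ (-s)) =
      ∑' p : Nat.Primes, -Real.log (1 - (p : ℝ) ^ (-s)) := by
  have hsum : Summable (fun n => ‖auxHom s hs n‖) := by
    refine (aux_summable hs).norm
  have h := EulerProduct.eulerProduct_completely_multiplicative_tprod hsum
  have h2 : ∑' n, auxHom s hs n = ∑' n : ℕ, ((n : ℝ) + 1) ^ (-s) := by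
    rw [hsum.of_norm.tsum_eq_zero_add, map_zero, zero_add]
    simp [auxHom]
  have hpos : ∀ p : Nat.Primes, 0 < (1 - auxHom s hs p)⁻¹ := fun p =>
    inv_pos.mpr (sub_pos.mpr (aux_lt_one hs (aux_one_lt p)))
  have hl : ∀ p : Nat.Primes, Real.log ((1 - auxHom s hs p)⁻¹) =
      -Real.log (1 - (p : ℝ) ^ (-s)) := fun p => by
    rw [Real.log_inv]; rfl
  have h3 := Real.rexp_tsum_eq_tprod hpos (by simpa only [hl] using (aux_summable_log hs).neg)
  rw [← h2, ← h, ← h3, Real.log_exp]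
  exact tsum_congr hl

lemma aux_deriv {s x : ℝ} (hs : 1 < s) (hx : 1 < x) :
    HasDerivAt (fun x : ℝ => Real.log (1 - x ^ (-s)) / s) (1 / (x * (x ^ s - 1))) x := by
  have h0 : 0 < x := by linarith
  have h1 := aux_lt_one hs hx
  have h2 : 1 < x ^ s := Real.one_lt_rpow hx (by linarith)
  have h := (((Real.hasDerivAt_rpow_const (p := -s) (Or.inl h0.ne')).const_sub 1).log
    (by linarith)).div_const s
  refine h.congr_deriv ?_
  rw [Real.rpow_sub_one h0.ne', Real.rpow_neg h0.le] at *
  have h3 : x ^ s - 1 ≠ 0 := by linarith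
  have h4 : x ^ s ≠ 0 := by linarith
  have h5 : s ≠ 0 := by linarith
  have h6 : 1 - (x ^ s)⁻¹ = (x ^ s - 1) / x ^ s := by field_simp
  rw [h6]
  field_simp

lemma aux_tendsto {s : ℝ} (hs : 1 < s) :
    Filter.Tendsto (fun x : ℝ => Real.log (1 - x ^ (-s)) / s) Filter.atTop (nhds 0) := by
  have h := tendsto_rpow_neg_atTop (y := s) (by linarith)
  have h1 := ((h.const_sub 1).log (by simp)).div_const s
  simpa using h1

lemma aux_nonneg {s x : ℝ} (hs : 1 < s) (hx : 1 < x) : 0 ≤ 1 / (x * (x ^ s - 1)) := by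
  have h2 : 1 < x ^ s := Real.one_lt_rpow hx (by linarith)
  have : 0 < x ^ s - 1 := by linarith
  positivity

lemma aux_sum (x c : ℝ) (hx : 0 ≤ x) :
    ∑' p : Nat.Primes, (Set.Ici ((p : ℕ) : ℝ)).indicator (fun _ => c) x = primePi x * c := by
  have h1 := tsum_subtype {p : ℕ | p.Prime} (fun p : ℕ => (Set.Ici (p : ℝ)).indicator (fun _ => c) x)
  refine h1.trans ?_
  rw [tsum_eq_sum (s := Nat.primesLE ⌊x⌋₊)]
  · rw [primePi, ← Nat.primesLE_card_eq_primeCounting, ← nsmul_eq_mul, ← Finset.sum_const]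
    refine Finset.sum_congr rfl fun p hp => ?_
    rw [Nat.mem_primesLE] at hp
    have : (p : ℝ) ≤ x := (Nat.le_floor_iff hx).mp hp.1
    simp [hp.2, this]
  · intro p hp
    rw [Nat.mem_primesLE, Nat.le_floor_iff hx] at hp
    by_cases h : p.Prime
    · have : ¬ (p : ℝ) ≤ x := fun h' => hp ⟨h', h⟩
      simp [this]
    · simp [h]

/-- For real `s > 1`, `(log ζ(s))/s = ∫_2^∞ π(x)/(x(x^s - 1)) dx`, where `ζ(s)` is
the convergent series `∑ n^(-s)`. -/
theorem log_zeta_div_eq_integral_primePi (s : ℝ) (hs : 1 < s) :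
    Real.log (∑' n : ℕ, ((n : ℝ) + 1) ^ (-s)) / s =
      ∫ x in Set.Ioi (2 : ℝ), (primePi x : ℝ) / (x * (x ^ s - 1)) := by
  set g : ℝ → ℝ := fun x => 1 / (x * (x ^ s - 1)) with hg
  let F : Nat.Primes → ℝ → ℝ := fun p => (Set.Ici ((p : ℕ) : ℝ)).indicator g
  have hint : ∀ p, MeasureTheory.Integrable (F p) := fun p => by
    rw [MeasureTheory.integrable_indicator_iff measurableSet_Ici, integrableOn_Ici_iff_integrableOn_Ioi]
    exact MeasureTheory.integrableOn_Ioi_deriv_of_nonneg'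
      (fun x hx => aux_deriv hs ((aux_one_lt p).trans_le hx))
      (fun x hx => aux_nonneg hs ((aux_one_lt p).trans hx)) (aux_tendsto hs)
  have hval : ∀ p : Nat.Primes, ∫ x, F p x = -Real.log (1 - (p : ℝ) ^ (-s)) / s := fun p => by
    rw [MeasureTheory.integral_indicator measurableSet_Ici, MeasureTheory.integral_Ici_eq_integral_Ioi,
      MeasureTheory.integral_Ioi_of_hasDerivAt_of_nonneg'
      (fun x hx => aux_deriv hs ((aux_one_lt p).trans_le hx))
      (fun x hx => aux_nonneg hs ((aux_one_lt p).trans hx)) (aux_tendsto hs)]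
    ring
  have hnorm : ∀ p x, ‖F p x‖ = F p x := fun p x => by
    rw [Real.norm_of_nonneg]
    exact Set.indicator_nonneg (fun x hx => aux_nonneg hs ((aux_one_lt p).trans_le hx)) x
  have key := MeasureTheory.hasSum_integral_of_summable_integral_norm hint (by
    simp only [hnorm, hval]
    exact (aux_summable_log hs).neg.div_const s)
  rw [aux_log_zeta hs, ← tsum_div_const]
  simp only [hval] at key
  rw [key.tsum_eq, ← MeasureTheory.integral_Ici_eq_integral_Ioi,
    ← MeasureTheory.setIntegral_eq_integral_of_forall_compl_eq_zero (s := Set.Ici 2)]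
  · refine MeasureTheory.setIntegral_congr_fun measurableSet_Ici fun x hx => ?_
    have hx' : (2 : ℝ) ≤ x := hx
    have := aux_sum x (g x) (by linarith)
    simp only [hg, div_eq_mul_one_div (primePi x : ℝ)]
    rw [← this]
    exact tsum_congr fun p => by simp [F, Set.indicator_apply, hg]
  · intro x hx
    have hx' : x < 2 := not_le.mp hx
    rw [← tsum_zero (α := ℝ) (β := Nat.Primes)]
    refine tsum_congr fun p => Set.indicator_of_notMem ?_ _
    have : (2 : ℝ) ≤ ((p : ℕ) : ℝ) := by exact_mod_cast p.2.two_le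
    simp only [Set.mem_Ici, not_le]
    linarith
end

section
/- There exists an entire function F : ℂ → ℂ such that F(s) = (1/2)·s·(s−1)·π^{−s/2}·Γ(s/2)·ζ(s) for every s with Re(s) > 0 and s ≠ 1, and such that F(s) = F(1−s) for all s ∈ ℂ. -/
/-- There is an entire function agreeing with
`(1/2) s (s-1) π^(-s/2) Γ(s/2) ζ(s)` on `{Re(s) > 0, s ≠ 1}` and satisfying
`F(s) = F(1-s)` everywhere. -/
theorem exists_entire_xi :
    ∃ F : ℂ → ℂ, Differentiable ℂ F ∧
      (∀ s : ℂ, 0 < s.re → s ≠ 1 →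
        F s = (1 / 2) * s * (s - 1) * (Real.pi : ℂ) ^ (-s / 2) * Complex.Gamma (s / 2) *
          riemannZeta s) ∧
      (∀ s : ℂ, F s = F (1 - s)) := by
  refine ⟨fun s => (1 / 2) * (s * (s - 1) * completedRiemannZeta₀ s + 1), ?_, ?_, ?_⟩
  · have := differentiable_completedZeta₀
    fun_prop
  · intro s hs h1
    have h0 : s ≠ 0 := by
      rintro rfl
      simp at hs
    have hG : Complex.Gammaℝ s ≠ 0 := Complex.Gammaℝ_ne_zero_of_re_pos hs
    have h2 : (1 : ℂ) - s ≠ 0 := sub_ne_zero.mpr (Ne.symm h1)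
    have key : Complex.Gammaℝ s * riemannZeta s = completedRiemannZeta s := by
      rw [riemannZeta_def_of_ne_zero h0]
      field_simp
    have e : (1 / 2) * s * (s - 1) * (Real.pi : ℂ) ^ (-s / 2) * Complex.Gamma (s / 2) *
          riemannZeta s = (1 / 2) * s * (s - 1) * (Complex.Gammaℝ s * riemannZeta s) := by
      rw [Complex.Gammaℝ_def]
      ring
    rw [e, key, completedRiemannZeta_eq]
    field_simp
    ring
  · intro s
    simp only [completedRiemannZeta₀_one_sub]
    ring
end

section
/- For every real number t, ξ(1/2 + it) = 1/2 − (t² + 1/4) · ∫_1^∞ ψ(x) · x^{−3/4} · cos((t/2)·log x) dx; in particular ξ(1/2 + it) is real, i.e. Im ξ(1/2 + it) = 0. -/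
open Complex Set

/-- `ψ(x) = ∑_{n ≥ 1} exp(-π n² x)`. -/
noncomputable def jacobiPsi (x : ℝ) : ℝ :=
  ∑' n : ℕ, Real.exp (-Real.pi * ((n : ℝ) + 1) ^ 2 * x)

/-- Riemann's xi function `ξ(s) = (1/2) s (s-1) π^(-s/2) Γ(s/2) ζ(s)`. -/
noncomputable def riemannXiFun (s : ℂ) : ℂ :=
  (1 / 2) * s * (s - 1) * (Real.pi : ℂ) ^ (-s / 2) * Complex.Gamma (s / 2) * riemannZeta s

open MeasureTheory HurwitzZeta

lemma xi_cosKernel (x : ℝ) (hx : 0 < x) : evenKernel 0 x - 1 = 2 * jacobiPsi x := by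
  have h := hasSum_nat_cosKernel₀ 0 hx
  rw [evenKernel_eq_cosKernel_of_zero]
  simp only [mul_zero, zero_mul, Real.cos_zero, mul_one, QuotientAddGroup.mk_zero] at h
  rw [jacobiPsi, ← tsum_mul_left]
  exact h.tsum_eq.symm

noncomputable def xiH (x : ℝ) : ℂ := (Ioi (1:ℝ)).indicator (fun x => (2 * jacobiPsi x : ℂ)) x

lemma xi_modif (x : ℝ) (hx : 0 < x) :
    (hurwitzEvenFEPair 0).f_modif x = xiH x + (x : ℂ) ^ (-(1/2) : ℂ) • xiH (x⁻¹) := by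
  have hfe := evenKernel_functional_equation 0 x
  rw [← evenKernel_eq_cosKernel_of_zero] at hfe
  have hp : (x : ℂ) ^ (-(1/2) : ℂ) = ((x ^ (-(1/2) : ℝ) : ℝ) : ℂ) := by
    rw [Complex.ofReal_cpow hx.le]; push_cast; rfl
  rw [hp]
  rcases lt_trichotomy x 1 with h | rfl | h
  · have h1 : 1 < x⁻¹ := (one_lt_inv₀ hx).2 h
    have h2 := xi_cosKernel x⁻¹ (inv_pos.2 hx)
    have h3 : evenKernel 0 x - x ^ (-(1/2) : ℝ) = x ^ (-(1/2) : ℝ) * (2 * jacobiPsi x⁻¹) := by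
      rw [hfe, ← h2, Real.rpow_neg hx.le]; simp only [one_div]; ring
    simp [xiH, WeakFEPair.f_modif, hurwitzEvenFEPair, h, h1, hx, h.le, not_lt.2 h.le]
    have h4 := congrArg (Complex.ofReal) h3
    simpa using h4
  · simp [xiH, WeakFEPair.f_modif]
  · have h1 : ¬ 1 < x⁻¹ := not_lt.2 (inv_le_one_of_one_le₀ h.le)
    simp [xiH, WeakFEPair.f_modif, hurwitzEvenFEPair, h, h1, not_lt.2 h.le]
    exact_mod_cast xi_cosKernel x hx

lemma xi_conv (w : ℂ) : IntegrableOn (fun x : ℝ => (x : ℂ) ^ (w - 1) * (2 * jacobiPsi x : ℂ)) (Ioi 1) := by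
  have h : MellinConvergent (hurwitzEvenFEPair 0).f_modif w :=
    ((hurwitzEvenFEPair 0).isStrongFEPair_toStrongFEPair.hasMellin w).1
  refine (IntegrableOn.mono_set h (Ioi_subset_Ioi zero_le_one)).congr_fun ?_ measurableSet_Ioi
  intro x hx
  have h0 : (0:ℝ) < x := lt_trans one_pos hx
  have h1 : ¬ 1 < x⁻¹ := not_lt.2 (inv_le_one_of_one_le₀ (le_of_lt hx))
  simp only [xi_modif x h0, xiH]
  rw [indicator_of_mem hx, indicator_of_notMem (show x⁻¹ ∉ Ioi 1 from h1)]
  simp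

lemma xiH_mellin (w : ℂ) : HasMellin xiH w
    (∫ x in Ioi (1:ℝ), (x : ℂ) ^ (w - 1) * (2 * jacobiPsi x : ℂ)) := by
  have e : (fun x : ℝ => (x : ℂ) ^ (w - 1) • xiH x) =
      (Ioi (1:ℝ)).indicator (fun x => (x : ℂ) ^ (w - 1) * (2 * jacobiPsi x : ℂ)) := by
    ext x
    by_cases h : x ∈ Ioi (1:ℝ) <;> simp [xiH, h]
  constructor
  · rw [MellinConvergent, e]
    exact ((integrable_indicator_iff measurableSet_Ioi).2 (xi_conv w)).integrableOn
  · rw [mellin, e, setIntegral_indicator measurableSet_Ioi,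
      inter_eq_right.2 (Ioi_subset_Ioi zero_le_one)]

lemma xi_Λ₀ (w : ℂ) : (hurwitzEvenFEPair 0).Λ₀ w =
    (∫ x in Ioi (1:ℝ), (x : ℂ) ^ (w - 1) * (2 * jacobiPsi x : ℂ)) +
    ∫ x in Ioi (1:ℝ), (x : ℂ) ^ ((1/2 - w) - 1) * (2 * jacobiPsi x : ℂ) := by
  have h2 := xiH_mellin (1/2 - w)
  have c : MellinConvergent (fun x : ℝ => (x : ℂ) ^ (-(1/2) : ℂ) • xiH (x⁻¹)) w := by
    rw [MellinConvergent.cpow_smul]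
    have := (MellinConvergent.comp_rpow (f := xiH) (s := w + -(1/2)) (a := -1) (by norm_num)).2
      (by convert h2.1 using 1; push_cast; ring)
    simpa [Real.rpow_neg_one] using this
  have m : mellin (fun x : ℝ => (x : ℂ) ^ (-(1/2) : ℂ) • xiH (x⁻¹)) w = mellin xiH (1/2 - w) := by
    rw [mellin_cpow_smul, mellin_comp_inv]
    congr 1; ring
  rw [← (xiH_mellin w).2, ← h2.2, ← m, ← (hasMellin_add (xiH_mellin w).1 c).2]
  refine setIntegral_congr_fun measurableSet_Ioi fun x hx => ?_
  simp only [xi_modif x hx]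

lemma xi_Λ₀_crit (t : ℝ) : completedRiemannZeta₀ (1 / 2 + t * Complex.I) =
    2 * ((∫ x in Ioi (1 : ℝ), jacobiPsi x * x ^ (-(3 : ℝ) / 4) *
          Real.cos (t / 2 * Real.log x) : ℝ) : ℂ) := by
  rw [completedRiemannZeta₀, completedHurwitzZetaEven₀, xi_Λ₀,
    ← integral_add (xi_conv _) (xi_conv _), ← integral_complex_ofReal, div_eq_iff two_ne_zero,
    mul_right_comm, ← integral_const_mul]
  refine setIntegral_congr_fun measurableSet_Ioi fun x hx => ?_
  have h0 : (0:ℝ) < x := lt_trans one_pos hx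
  have hx0 : (x : ℂ) ≠ 0 := Complex.ofReal_ne_zero.2 h0.ne'
  have e1 : ((1 / 2 + t * Complex.I) / 2 - 1 : ℂ) = ((-(3:ℝ)/4 : ℝ) : ℂ) + (t / 2) * I := by
    push_cast; ring
  have e2 : (1/2 - (1 / 2 + t * Complex.I) / 2 - 1 : ℂ) = ((-(3:ℝ)/4 : ℝ) : ℂ) + -(t / 2) * I := by
    push_cast; ring
  simp only [e1, e2]
  rw [Complex.cpow_add _ _ hx0, Complex.cpow_add _ _ hx0, ← Complex.ofReal_cpow h0.le,
    Complex.cpow_def_of_ne_zero hx0, Complex.cpow_def_of_ne_zero hx0, ← Complex.ofReal_log h0.le]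
  push_cast
  rw [Complex.cos]
  have e3 : (Real.log x : ℂ) * (t / 2 * I) = t / 2 * Real.log x * I := by ring
  have e4 : (Real.log x : ℂ) * (-(t / 2) * I) = -(t / 2 * Real.log x) * I := by ring
  rw [e3, e4]
  ring

/-- On the critical line,
`ξ(1/2 + it) = 1/2 - (t² + 1/4) ∫_1^∞ ψ(x) x^(-3/4) cos((t/2) log x) dx`;
in particular `ξ(1/2 + it)` is real. -/
theorem riemannXiFun_critical_line (t : ℝ) :
    riemannXiFun (1 / 2 + t * Complex.I) =
      1 / 2 - ((t ^ 2 + 1 / 4 : ℝ) : ℂ) *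
        ((∫ x in Ioi (1 : ℝ), jacobiPsi x * x ^ (-(3 : ℝ) / 4) *
          Real.cos (t / 2 * Real.log x) : ℝ) : ℂ) ∧
    (riemannXiFun (1 / 2 + t * Complex.I)).im = 0 := by
  have key : riemannXiFun (1 / 2 + t * Complex.I) =
      1 / 2 - ((t ^ 2 + 1 / 4 : ℝ) : ℂ) *
        ((∫ x in Ioi (1 : ℝ), jacobiPsi x * x ^ (-(3 : ℝ) / 4) *
          Real.cos (t / 2 * Real.log x) : ℝ) : ℂ) := by
    have h0 := xi_Λ₀_crit t
    set J : ℂ := ((∫ x in Ioi (1 : ℝ), jacobiPsi x * x ^ (-(3 : ℝ) / 4) *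
          Real.cos (t / 2 * Real.log x) : ℝ) : ℂ)
    have hs' : (((t ^ 2 + 1 / 4 : ℝ) : ℝ) : ℂ) =
      -((1 / 2 + t * Complex.I) * ((1 / 2 + t * Complex.I) - 1)) := by
      push_cast; ring_nf; rw [Complex.I_sq]; ring
    rw [hs']
    set s : ℂ := 1 / 2 + t * Complex.I with hs
    have hre : s.re = 1 / 2 := by simp [hs]
    have s0 : s ≠ 0 := fun h => by rw [h] at hre; norm_num at hre
    have s1 : 1 - s ≠ 0 := fun h => by
      have : s = 1 := (sub_eq_zero.1 h).symm
      rw [this] at hre; norm_num at hre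
    have hG : Complex.Gammaℝ s ≠ 0 := Complex.Gammaℝ_ne_zero_of_re_pos (by rw [hre]; norm_num)
    have hL : (Real.pi : ℂ) ^ (-s / 2) * Complex.Gamma (s / 2) * riemannZeta s =
        completedRiemannZeta s := by
      rw [riemannZeta_def_of_ne_zero s0, ← Complex.Gammaℝ_def, mul_div_cancel₀ _ hG]
    have : riemannXiFun s = (1 / 2) * s * (s - 1) * completedRiemannZeta s := by
      rw [← hL, riemannXiFun]; ring
    rw [this, completedRiemannZeta_eq, h0]
    field_simp
    ring
  refine ⟨key, ?_⟩
  rw [key, ← Complex.ofReal_mul, Complex.sub_im, Complex.ofReal_im]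
  norm_num
end

section
/- For every complex number s that is not a nonpositive integer and with 2^{s−1} ≠ 1, the Dirichlet eta function satisfies η(1−s) = −((2^s − 1) / ((2^{s−1} − 1) · π^s)) · cos(πs/2) · Γ(s) · η(s). -/
/-- The Dirichlet eta function `η(s) = (1 - 2^(1-s)) ζ(s)`. -/
noncomputable def dirichletEta (s : ℂ) : ℂ := (1 - (2 : ℂ) ^ (1 - s)) * riemannZeta s

/-- The functional equation of the Dirichlet eta function:
`η(1-s) = -((2^s - 1)/((2^(s-1) - 1) π^s)) cos(πs/2) Γ(s) η(s)` for `s` not a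
nonpositive integer with `2^(s-1) ≠ 1`. -/
theorem dirichletEta_functional_equation (s : ℂ)
    (h1 : ∀ n : ℕ, s ≠ -(n : ℂ)) (h2 : (2 : ℂ) ^ (s - 1) ≠ 1) :
    dirichletEta (1 - s) =
      -(((2 : ℂ) ^ s - 1) / (((2 : ℂ) ^ (s - 1) - 1) * (Real.pi : ℂ) ^ s)) *
        Complex.cos (Real.pi * s / 2) * Complex.Gamma s * dirichletEta s := by
  have hs' : s ≠ 1 := by
    rintro rfl
    simp at h2
  have ha : (2 : ℂ) ^ s ≠ 0 := by simp [Complex.cpow_eq_zero_iff]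
  have hp : (Real.pi : ℂ) ^ s ≠ 0 := by simp [Complex.cpow_eq_zero_iff, Real.pi_ne_zero]
  have e1 : (2 : ℂ) ^ (s - 1) = 2 ^ s / 2 := by
    rw [Complex.cpow_sub _ _ two_ne_zero, Complex.cpow_one]
  have e2 : (2 : ℂ) ^ (1 - s) = 2 / 2 ^ s := by
    rw [Complex.cpow_sub _ _ two_ne_zero, Complex.cpow_one]
  have e3 : (2 * (Real.pi : ℂ)) ^ (-s) = (2 ^ s)⁻¹ * ((Real.pi : ℂ) ^ s)⁻¹ := by
    have h := Complex.mul_cpow_ofReal_nonneg (a := 2) (b := Real.pi) (by norm_num) Real.pi_pos.le s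
    rw [Complex.ofReal_ofNat] at h
    rw [Complex.cpow_neg, h, mul_inv]
  unfold dirichletEta
  rw [riemannZeta_one_sub h1 hs', sub_sub_cancel, e1, e2, e3]
  rw [e1] at h2
  have h3 : (2 : ℂ) ^ s / 2 - 1 ≠ 0 := sub_ne_zero.mpr h2
  have h4 : (2 : ℂ) ^ s - 2 ≠ 0 := by
    intro h
    apply h3
    linear_combination h / 2
  generalize (2 : ℂ) ^ s = a at *
  generalize (Real.pi : ℂ) ^ s = p at *
  have h5 : a / 2 - 1 = (a - 2) / 2 := by ring
  rw [h5]
  field_simp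
  ring
end

section
/- The set { t : ℝ | ζ(1/2 + it) = 0 } is infinite; that is, the Riemann zeta function has infinitely many zeros on the critical line Re(s) = 1/2. -/
section HardySection

open Complex Filter Topology Asymptotics Set MeasureTheory

namespace HardyAux


noncomputable def Th (z : ℂ) : ℂ := jacobiTheta (I * z)

lemma Th_feq {z : ℂ} (hz : 0 < z.re) : Th (1 / z) = z ^ (1 / 2 : ℂ) * Th z := by
  have him : 0 < (I * z).im := by simpa using hz
  have hz0 : z ≠ 0 := by rintro rfl; simp at hz
  have h := jacobiTheta_S_smul ⟨I * z, him⟩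
  rw [UpperHalfPlane.modular_S_smul] at h
  unfold Th
  convert h using 2
  · field_simp
    simp
  · congr 1
    rw [← mul_assoc]; simp

lemma Th_sub_one_le {z : ℂ} (hz : 0 < z.re) :
    ‖Th z - 1‖ ≤ 2 / (1 - Real.exp (-Real.pi * z.re)) * Real.exp (-Real.pi * z.re) := by
  have him : 0 < (I * z).im := by simpa using hz
  have := norm_jacobiTheta_sub_one_le him
  simpa [Th] using this

lemma Th_continuousAt {z : ℂ} (hz : 0 < z.re) : ContinuousAt Th z := by
  have him : 0 < (I * z).im := by simpa using hz
  have h : ContinuousAt (fun w : ℂ => I * w) z := by fun_prop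
  exact ContinuousAt.comp (g := jacobiTheta) (continuousAt_jacobiTheta him) h

lemma Th_top {z : ℂ} (hz : 0 < z.re) (r : ℝ) :
    (fun x : ℝ => Th (z * x) - 1) =O[atTop] (fun x : ℝ => x ^ r) := by
  have h1 : (fun x : ℝ => Th (z * x) - 1) =O[atTop]
      (fun x : ℝ => Real.exp (-(Real.pi * z.re) * x)) := by
    refine IsBigO.of_bound (2 / (1 - Real.exp (-Real.pi * z.re))) ?_
    filter_upwards [eventually_ge_atTop 1] with x hx
    have hre : (z * x).re = z.re * x := by simp
    have hp : 0 < (z * x).re := by rw [hre]; positivity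
    refine (Th_sub_one_le hp).trans ?_
    rw [hre, Real.norm_eq_abs, Real.abs_exp]
    have e1 : Real.exp (-Real.pi * (z.re * x)) = Real.exp (-(Real.pi * z.re) * x) := by
      congr 1; ring
    rw [e1]
    have e2 : Real.exp (-(Real.pi * z.re) * x) ≤ Real.exp (-Real.pi * z.re) := by
      apply Real.exp_le_exp.mpr
      have : 0 < Real.pi * z.re := mul_pos Real.pi_pos hz
      nlinarith
    have e3 : Real.exp (-Real.pi * z.re) < 1 := by
      have : 0 < Real.pi * z.re := mul_pos Real.pi_pos hz
      exact Real.exp_lt_one_iff.mpr (by linarith)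
    have e4 : 0 < 1 - Real.exp (-Real.pi * z.re) := by linarith
    gcongr
  exact h1.trans (isLittleO_exp_neg_mul_rpow_atTop (mul_pos Real.pi_pos hz) r).isBigO

lemma Th_cont {z : ℂ} (hz : 0 < z.re) : ContinuousOn (fun x : ℝ => Th (z * x)) (Ioi 0) := by
  intro x hx
  have hx : 0 < x := hx
  have hp : 0 < (z * (x:ℂ)).re := by simp; positivity
  exact (ContinuousAt.comp (g := Th) (f := fun x : ℝ => z * (x:ℂ)) (Th_continuousAt hp) (by fun_prop)).continuousWithinAt

lemma ofReal_mul_cpow' {x : ℝ} (hx : 0 < x) {z : ℂ} (hz : z ≠ 0) (s : ℂ) :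
    ((x : ℂ) * z) ^ s = (x : ℂ) ^ s * z ^ s := by
  have hx0 : (x : ℂ) ≠ 0 := by exact_mod_cast hx.ne'
  rw [cpow_def_of_ne_zero (mul_ne_zero hx0 hz), cpow_def_of_ne_zero hx0, cpow_def_of_ne_zero hz,
    log_ofReal_mul hx hz, ofReal_log hx.le, add_mul, Complex.exp_add]

lemma inv_re_pos {z : ℂ} (hz : 0 < z.re) : 0 < (z⁻¹).re := by
  have hz0 : z ≠ 0 := by rintro rfl; simp at hz
  rw [inv_re]
  exact div_pos hz (normSq_pos.mpr hz0)

noncomputable def P (z : ℂ) (hz : 0 < z.re) : WeakFEPair ℂ where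
  f := fun x => Th (z * x)
  g := fun x => Th (z⁻¹ * x)
  k := 1 / 2
  ε := z ^ (-(1 / 2) : ℂ)
  f₀ := 1
  g₀ := 1
  hf_int := (Th_cont hz).locallyIntegrableOn measurableSet_Ioi
  hg_int := (Th_cont (inv_re_pos hz)).locallyIntegrableOn measurableSet_Ioi
  hk := by norm_num
  hε := by
    have hz0 : z ≠ 0 := by rintro rfl; simp at hz
    simp [cpow_eq_zero_iff, hz0]
  h_feq := by
    intro x hx
    have hx : 0 < x := hx
    have hz0 : z ≠ 0 := by rintro rfl; simp at hz
    have hx0 : (x : ℂ) ≠ 0 := by exact_mod_cast hx.ne'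
    have hp : 0 < (z⁻¹ * (x:ℂ)).re := by
      have := inv_re_pos hz
      rw [re_mul_ofReal]; positivity
    have h := Th_feq hp
    have e : z * ((1 / x : ℝ) : ℂ) = 1 / (z⁻¹ * x) := by push_cast; field_simp
    simp only [smul_eq_mul]
    rw [e, h]
    congr 1
    have harg : z.arg ≠ Real.pi := by
      intro h
      rw [arg_eq_pi_iff] at h
      linarith [h.1]
    rw [mul_comm z⁻¹, mul_comm _ ((x ^ (1 / 2 : ℝ) : ℝ) : ℂ), ofReal_mul_cpow' hx (inv_ne_zero hz0),
      inv_cpow _ _ harg, cpow_neg, ofReal_cpow hx.le]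
    push_cast
    rfl
  hf_top := Th_top hz
  hg_top := Th_top (inv_re_pos hz)




lemma cont_aux (s z : ℂ) : ContinuousOn (fun t : ℝ => (t : ℂ) ^ (s - 1) * cexp (-(z * t))) (Ioi 0) := by
  refine ContinuousOn.mul ?_ (by fun_prop)
  refine continuousOn_of_forall_continuousAt (fun x hx ↦ ?_)
  exact continuousAt_ofReal_cpow_const _ _ (Or.inr (ne_of_gt hx))

lemma norm_aux (s z : ℂ) {t : ℝ} (ht : 0 < t) :
    ‖(t : ℂ) ^ (s - 1) * cexp (-(z * t))‖ = t ^ (s.re - 1) * Real.exp (-z.re * t) := by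
  rw [norm_mul, norm_cpow_eq_rpow_re_of_pos ht, Complex.norm_exp]
  simp

lemma real_int {a b : ℝ} (ha : 0 < a) (hb : 0 < b) :
    IntegrableOn (fun t : ℝ => t ^ (a - 1) * Real.exp (-b * t)) (Ioi 0) := by
  simpa using integrableOn_rpow_mul_exp_neg_mul_rpow (p := 1) (s := a - 1) (b := b) (by linarith) one_pos hb

lemma int_aux {s z : ℂ} (hs : 0 < s.re) (hz : 0 < z.re) :
    IntegrableOn (fun t : ℝ => (t : ℂ) ^ (s - 1) * cexp (-(z * t))) (Ioi 0) := by
  refine Integrable.mono' (real_int hs hz) ((cont_aux s z).aestronglyMeasurable measurableSet_Ioi) ?_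
  filter_upwards [ae_restrict_mem measurableSet_Ioi] with t ht
  rw [norm_aux s z ht]

lemma diff_aux {s z : ℂ} (hs : 0 < s.re) (hz : 0 < z.re) :
    DifferentiableAt ℂ (fun z : ℂ => ∫ t : ℝ in Ioi 0, (t : ℂ) ^ (s - 1) * cexp (-(z * t))) z := by
  have hopen : {w : ℂ | z.re / 2 < w.re} ∈ 𝓝 z :=
    (isOpen_lt continuous_const continuous_re).mem_nhds (by simp; linarith)
  refine (hasDerivAt_integral_of_dominated_loc_of_deriv_le (s := {w : ℂ | z.re / 2 < w.re})
    (F := fun (z : ℂ) (t : ℝ) => (t : ℂ) ^ (s - 1) * cexp (-(z * t)))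
    (F' := fun (z : ℂ) (t : ℝ) => -((t : ℂ) ^ ((s + 1) - 1) * cexp (-(z * t))))
    (bound := fun t : ℝ => t ^ ((s + 1).re - 1) * Real.exp (-(z.re / 2) * t))
    hopen ?_ (int_aux hs hz) ?_ ?_ ?_ ?_).2.differentiableAt
  · exact Eventually.of_forall fun w => (cont_aux s w).aestronglyMeasurable measurableSet_Ioi
  · exact ((cont_aux (s + 1) z).aestronglyMeasurable measurableSet_Ioi).neg
  · filter_upwards [ae_restrict_mem measurableSet_Ioi] with t ht w hw
    have ht : 0 < t := ht
    have hw : z.re / 2 < w.re := hw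
    rw [norm_neg, norm_aux (s + 1) w ht]
    gcongr
  · exact real_int (by simp; linarith) (by linarith)
  · filter_upwards [ae_restrict_mem measurableSet_Ioi] with t ht w hw
    have ht : 0 < t := ht
    have ht0 : (t : ℂ) ≠ 0 := by exact_mod_cast ht.ne'
    have h1 : HasDerivAt (fun w : ℂ => -(w * t)) (-(1 * (t : ℂ))) w :=
      ((hasDerivAt_id w).mul_const (t : ℂ)).neg
    have h := (h1.cexp).const_mul ((t : ℂ) ^ (s - 1))
    refine h.congr_deriv ?_
    have : (t : ℂ) ^ ((s + 1) - 1) = (t : ℂ) ^ (s - 1) * t := by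
      rw [show (s + 1) - 1 = (s - 1) + 1 by ring, cpow_add _ _ ht0, cpow_one]
    rw [this]; ring

lemma gamma_complex {s z : ℂ} (hs : 0 < s.re) (hz : 0 < z.re) :
    ∫ t : ℝ in Ioi 0, (t : ℂ) ^ (s - 1) * cexp (-(z * t)) = z ^ (-s) * Gamma s := by
  have hopen : IsOpen {w : ℂ | 0 < w.re} := isOpen_lt continuous_const continuous_re
  have hconv : Convex ℝ {w : ℂ | 0 < w.re} := convex_halfSpace_re_gt 0
  have hA : AnalyticOnNhd ℂ (fun z : ℂ => ∫ t : ℝ in Ioi 0, (t : ℂ) ^ (s - 1) * cexp (-(z * t)))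
      {w : ℂ | 0 < w.re} :=
    DifferentiableOn.analyticOnNhd (fun w hw => (diff_aux hs hw).differentiableWithinAt) hopen
  have hB : AnalyticOnNhd ℂ (fun z : ℂ => z ^ (-s) * Gamma s) {w : ℂ | 0 < w.re} := by
    refine DifferentiableOn.analyticOnNhd (fun w hw => ?_) hopen
    refine DifferentiableAt.differentiableWithinAt ?_
    refine DifferentiableAt.mul_const ?_ _
    exact (differentiableAt_id).cpow_const (Or.inl hw)
  refine hA.eqOn_of_preconnected_of_frequently_eq hB hconv.isPreconnected (z₀ := 1) (by simp) ?_ hz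
  have hreal : ∀ r : ℝ, 0 < r → (∫ t : ℝ in Ioi 0, (t : ℂ) ^ (s - 1) * cexp (-((r : ℂ) * t)))
      = (r : ℂ) ^ (-s) * Gamma s := by
    intro r hr
    rw [integral_cpow_mul_exp_neg_mul_Ioi hs hr, one_div, inv_cpow_ofReal_nonneg hr.le, cpow_neg]
  have ht : Tendsto (fun r : ℝ => (r : ℂ)) (𝓝[≠] 1) (𝓝[≠] 1) := by
    refine tendsto_nhdsWithin_iff.mpr ⟨?_, ?_⟩
    · have : Tendsto (fun r : ℝ => (r : ℂ)) (𝓝 1) (𝓝 ((1 : ℝ) : ℂ)) := continuous_ofReal.tendsto 1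
      simpa using this.mono_left nhdsWithin_le_nhds
    · filter_upwards [self_mem_nhdsWithin] with r hr
      simpa using hr
  refine ht.frequently (Eventually.frequently ?_)
  have : ∀ᶠ r : ℝ in 𝓝[≠] 1, 0 < r := nhdsWithin_le_nhds (lt_mem_nhds one_pos)
  filter_upwards [this] with r hr
  exact hreal r hr

lemma cpow_mul_ofNat_helper (n : ℕ) (s : ℂ) :
    (((n + 1 : ℝ) ^ 2 : ℝ) : ℂ) ^ s = ((n : ℂ) + 1) ^ (2 * s) := by
  rw [sq, ofReal_mul, mul_cpow_ofReal_nonneg (by positivity) (by positivity)]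
  push_cast
  rw [two_mul, cpow_add _ _ (by exact_mod_cast Nat.succ_ne_zero n)]

lemma Lam_right {z : ℂ} (hz : 0 < z.re) {s : ℂ} (hs : 1 / 2 < s.re) :
    (P z hz).Λ s = z ^ (-s) * (2 * completedRiemannZeta (2 * s)) := by
  have hz0 : z ≠ 0 := by rintro rfl; simp at hz
  have hs0 : 0 < s.re := by linarith
  have h1 := ((P z hz).hasMellin (s := s) hs).2
  rw [← h1]
  have key : HasSum (fun n : ℕ => ∫ t : ℝ in Ioi 0,
      (t : ℂ) ^ (s - 1) * cexp (-((((Real.pi * (n + 1) ^ 2 : ℝ) : ℂ) * z) * t)))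
      (∫ t : ℝ in Ioi 0, ∑' n : ℕ,
      (t : ℂ) ^ (s - 1) * cexp (-((((Real.pi * (n + 1) ^ 2 : ℝ) : ℂ) * z) * t))) := by
    apply hasSum_integral_of_summable_integral_norm
    · intro n
      apply int_aux hs0
      rw [re_ofReal_mul]
      have := Real.pi_pos
      positivity
    · have : ∀ n : ℕ, (∫ t : ℝ in Ioi 0,
          ‖(t : ℂ) ^ (s - 1) * cexp (-((((Real.pi * (n + 1) ^ 2 : ℝ) : ℂ) * z) * t))‖) =
          (1 / (Real.pi * z.re)) ^ s.re * Real.Gamma s.re * (1 / ((n : ℝ) + 1) ^ (2 * s.re)) := by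
        intro n
        have hp : 0 < Real.pi * (n + 1 : ℝ) ^ 2 * z.re := by
          have := Real.pi_pos
          positivity
        have e := Real.integral_rpow_mul_exp_neg_mul_Ioi hs0 hp
        rw [show (∫ t : ℝ in Ioi 0,
          ‖(t : ℂ) ^ (s - 1) * cexp (-((((Real.pi * (n + 1) ^ 2 : ℝ) : ℂ) * z) * t))‖) =
          ∫ t : ℝ in Ioi 0, t ^ (s.re - 1) * Real.exp (-(Real.pi * (n + 1 : ℝ) ^ 2 * z.re * t)) from ?_, e]
        · have e2 : 1 / (Real.pi * (n + 1 : ℝ) ^ 2 * z.re) = (1 / (Real.pi * z.re)) * ((n + 1 : ℝ) ^ (2 : ℝ))⁻¹ := by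
            rw [Real.rpow_two]
            have := Real.pi_pos
            field_simp
          have := Real.pi_pos
          rw [e2, Real.mul_rpow (by positivity) (by positivity), Real.inv_rpow (by positivity),
            ← Real.rpow_mul (by positivity)]
          ring
        · refine setIntegral_congr_fun measurableSet_Ioi fun t ht => ?_
          rw [norm_aux _ _ ht, re_ofReal_mul, neg_mul]
      simp_rw [this]
      refine Summable.mul_left _ ?_
      have h2 := (Real.summable_one_div_nat_rpow (p := 2 * s.re)).mpr (by linarith)
      have := (summable_nat_add_iff 1).mpr h2
      simpa using this
  have e1 : mellin (fun x => (P z hz).f x - (P z hz).f₀) s = 2 * ∫ t : ℝ in Ioi 0, ∑' n : ℕ,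
      (t : ℂ) ^ (s - 1) * cexp (-((((Real.pi * (n + 1) ^ 2 : ℝ) : ℂ) * z) * t)) := by
    rw [mellin, ← integral_const_mul]
    refine setIntegral_congr_fun measurableSet_Ioi fun t ht => ?_
    have ht : 0 < t := ht
    have him : 0 < (I * (z * t)).im := by
      simp; positivity
    have := (hasSum_nat_jacobiTheta him).tsum_eq
    simp only [P, Th, smul_eq_mul]
    rw [tsum_mul_left]
    have e : ∀ n : ℕ, cexp (-((((Real.pi * (n + 1) ^ 2 : ℝ) : ℂ) * z) * t)) =
        cexp (Real.pi * I * ((n : ℂ) + 1) ^ 2 * (I * (z * t))) := by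
      intro n
      congr 1
      push_cast
      linear_combination (-(Real.pi : ℂ) * (n + 1) ^ 2 * z * t) * I_sq
    simp_rw [e]
    rw [this]; ring
  rw [e1, ← key.tsum_eq]
  have e2 : ∀ n : ℕ, (∫ t : ℝ in Ioi 0,
      (t : ℂ) ^ (s - 1) * cexp (-((((Real.pi * (n + 1) ^ 2 : ℝ) : ℂ) * z) * t))) =
      z ^ (-s) * ((Real.pi : ℂ) ^ (-s) * Gamma s) * (1 / ((n : ℂ) + 1) ^ (2 * s)) := by
    intro n
    have hp : 0 < Real.pi * (n + 1 : ℝ) ^ 2 := by have := Real.pi_pos; positivity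
    rw [gamma_complex hs0 (by rw [re_ofReal_mul]; positivity), ofReal_mul_cpow' hp hz0, ofReal_mul,
      mul_cpow_ofReal_nonneg Real.pi_pos.le (by positivity)]
    have : (((n + 1 : ℝ) ^ 2 : ℝ) : ℂ) ^ (-s) = 1 / ((n : ℂ) + 1) ^ (2 * s) := by
      rw [cpow_neg, one_div, cpow_mul_ofNat_helper n s]
    rw [this]; ring
  simp_rw [e2]
  rw [tsum_mul_left, completedZeta_eq_tsum_of_one_lt_re (by simp; linarith),
    ← zeta_eq_tsum_one_div_nat_cpow (by simp; linarith),
    zeta_eq_tsum_one_div_nat_add_one_cpow (by simp; linarith)]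
  have e3 : -(2 * s) / 2 = -s := by ring
  have e4 : 2 * s / 2 = s := by ring
  rw [e3, e4]; ring



lemma Lam_eq {z : ℂ} (hz : 0 < z.re) {s : ℂ} (hs0 : s ≠ 0) (hs1 : s ≠ 1 / 2) :
    (P z hz).Λ s = z ^ (-s) * (2 * completedRiemannZeta (2 * s)) := by
  have hz0 : z ≠ 0 := by rintro rfl; simp at hz
  have hfin : ({0, 1 / 2} : Set ℂ).Finite := by simp
  have hopen : IsOpen ({0, 1 / 2} : Set ℂ)ᶜ := hfin.isClosed.isOpen_compl
  have hconn : IsPreconnected ({0, 1 / 2} : Set ℂ)ᶜ :=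
    (hfin.countable.isPathConnected_compl_of_one_lt_rank (by simp)).isConnected.isPreconnected
  have hA : AnalyticOnNhd ℂ (P z hz).Λ ({0, 1 / 2} : Set ℂ)ᶜ := by
    refine DifferentiableOn.analyticOnNhd (fun w hw => ?_) hopen
    simp only [mem_compl_iff, mem_insert_iff, mem_singleton_iff, not_or] at hw
    refine ((P z hz).differentiableAt_Λ (Or.inl hw.1) (Or.inl ?_)).differentiableWithinAt
    have := hw.2
    simpa [P] using this
  have hB : AnalyticOnNhd ℂ (fun s => z ^ (-s) * (2 * completedRiemannZeta (2 * s)))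
      ({0, 1 / 2} : Set ℂ)ᶜ := by
    refine DifferentiableOn.analyticOnNhd (fun w hw => ?_) hopen
    simp only [mem_compl_iff, mem_insert_iff, mem_singleton_iff, not_or] at hw
    have h1 : DifferentiableAt ℂ completedRiemannZeta (2 * w) := by
      refine differentiableAt_completedZeta (by simpa using hw.1) ?_
      intro h
      apply hw.2
      linear_combination h / 2
    have h2 : DifferentiableAt ℂ (fun s => completedRiemannZeta (2 * s)) w :=
      DifferentiableAt.comp (g := completedRiemannZeta) w h1 (by fun_prop)
    have h3 : DifferentiableAt ℂ (fun s => z ^ (-s)) w :=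
      DifferentiableAt.const_cpow (by fun_prop) (Or.inl hz0)
    exact (h3.mul (h2.const_mul 2)).differentiableWithinAt
  refine hA.eqOn_of_preconnected_of_eventuallyEq hB hconn (z₀ := 1) (by simp) ?_ (x := s)
    (by simp only [mem_compl_iff, mem_insert_iff, mem_singleton_iff, not_or]; exact ⟨hs0, hs1⟩)
  have : {w : ℂ | 1 / 2 < w.re} ∈ 𝓝 (1 : ℂ) :=
    (isOpen_lt continuous_const continuous_re).mem_nhds (by simp; norm_num)
  filter_upwards [this] with w hw
  exact Lam_right hz hw

lemma hasMellin_cpow_Ioi (a : ℂ) {s : ℂ} (hs : s.re + a.re < 0) :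
    HasMellin (indicator (Ioi 1) (fun t : ℝ => (t : ℂ) ^ a)) s (-1 / (s + a)) := by
  have aux : (s - 1 + a).re < -1 := by simp; linarith
  have hm : MeasurableSet (Ioi (1 : ℝ)) := measurableSet_Ioi
  have hsub : Ioi (1 : ℝ) ⊆ Ioi 0 := Ioi_subset_Ioi zero_le_one
  have he : EqOn (fun t : ℝ => (t : ℂ) ^ (s - 1) * (t : ℂ) ^ a) (fun t : ℝ => (t : ℂ) ^ (s - 1 + a))
      (Ioi 1) := by
    intro t ht
    have ht : (0 : ℝ) < t := hsub ht
    exact (cpow_add _ _ (by exact_mod_cast ht.ne')).symm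
  simp_rw [HasMellin, mellin, MellinConvergent, ← indicator_smul, IntegrableOn,
    integrable_indicator_iff hm, smul_eq_mul, integral_indicator hm, IntegrableOn,
    Measure.restrict_restrict_of_subset hsub]
  constructor
  · exact (integrableOn_congr_fun he hm).mpr (integrableOn_Ioi_cpow_of_lt aux one_pos)
  · rw [setIntegral_congr_fun hm he, integral_Ioi_cpow_of_lt aux one_pos]
    simp
    congr 1
    ring

lemma hasMellin_congr {f g : ℝ → ℂ} {s a : ℂ} (h : HasMellin f s a)
    (hfg : ∀ x : ℝ, 0 < x → x ≠ 1 → g x = f x) : HasMellin g s a := by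
  have hae : (fun t : ℝ => (t : ℂ) ^ (s - 1) • f t) =ᵐ[volume.restrict (Ioi 0)]
      (fun t : ℝ => (t : ℂ) ^ (s - 1) • g t) := by
    have h1 : ∀ᵐ x : ℝ ∂(volume.restrict (Ioi 0)), x ≠ 1 :=
      ae_restrict_of_ae (Measure.ae_ne volume 1)
    filter_upwards [ae_restrict_mem measurableSet_Ioi, h1] with x hx hx1
    rw [hfg x hx hx1]
  refine ⟨Integrable.congr h.1 hae, ?_⟩
  rw [mellin, ← integral_congr_ae hae]
  exact h.2

lemma strip {z : ℂ} (hz : 0 < z.re) {s : ℂ} (hs0 : 0 < s.re) (hs1 : s.re < 1 / 2) :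
    HasMellin (fun x : ℝ => Th (z * x) - 1 - z ^ (-(1 / 2) : ℂ) * (x : ℂ) ^ (-(1 / 2) : ℂ)) s
      (z ^ (-s) * (2 * completedRiemannZeta (2 * s))) := by
  have n0 : s ≠ 0 := by rintro rfl; simp at hs0
  have n1 : s ≠ 1 / 2 := by rintro rfl; norm_num at hs1
  rw [← Lam_eq hz n0 n1]
  have hm := (P z hz).isStrongFEPair_toStrongFEPair.hasMellin s
  have hm1 : MellinConvergent (P z hz).f_modif s := hm.1
  have h1 := hasMellin_one_Ioc hs0
  have h2 := hasMellin_cpow_Ioi (-(1 / 2) : ℂ) (s := s) (by norm_num; linarith)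
  have h3 := hasMellin_sub hm1 h1.1
  have h2' := h2.1.const_smul (z ^ (-(1 / 2) : ℂ))
  have h4 := hasMellin_sub h3.1 h2'
  have e : (P z hz).Λ s = mellin (fun t => (P z hz).f_modif t - (Ioc 0 1).indicator (fun _ => 1) t) s
    - mellin (fun t => z ^ (-(1 / 2) : ℂ) • (Ioi 1).indicator (fun t : ℝ => (t : ℂ) ^ (-(1 / 2) : ℂ)) t) s := by
    rw [h3.2, h1.2, mellin_const_smul, h2.2, WeakFEPair.Λ, WeakFEPair.Λ₀]
    simp only [P, smul_eq_mul]
    have d1 : s + -(1 / 2) ≠ 0 := fun h => n1 (by linear_combination h)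
    have d2 : ((1 / 2 : ℝ) : ℂ) - s = - (s + -(1 / 2)) := by push_cast; ring
    rw [d2, div_neg]
    ring
  rw [e]
  refine hasMellin_congr h4 fun x hx hx1 => ?_
  simp only [WeakFEPair.f_modif, Pi.add_apply]
  rcases lt_or_gt_of_ne hx1 with h | h
  · rw [indicator_of_notMem (by simp [h.le]), indicator_of_mem (show x ∈ Ioo 0 1 from ⟨hx, h⟩),
      indicator_of_mem (show x ∈ Ioc 0 1 from ⟨hx, h.le⟩), indicator_of_notMem (by simp [h.le])]
    simp only [P, smul_eq_mul]
    rw [ofReal_cpow hx.le]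
    push_cast
    ring
  · rw [indicator_of_mem (show x ∈ Ioi 1 from h), indicator_of_notMem (by simp [h.le]),
      indicator_of_notMem (by simp [h]), indicator_of_mem (show x ∈ Ioi 1 from h)]
    simp only [P, smul_eq_mul]
    ring



noncomputable def Hc (y : ℝ) : ℂ := completedRiemannZeta (1 / 2 + 2 * y * I)
noncomputable def H (y : ℝ) : ℝ := (Hc y).re

lemma Hc_cont : Continuous Hc := by
  rw [continuous_iff_continuousAt]
  intro y
  have h1 : ContinuousAt completedRiemannZeta (1 / 2 + 2 * y * I) := by
    refine (differentiableAt_completedZeta ?_ ?_).continuousAt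
    · intro h; have := congrArg re h; simp at this
    · intro h; have := congrArg re h; norm_num at this
  exact ContinuousAt.comp (g := completedRiemannZeta) (f := fun y : ℝ => (1 / 2 + 2 * y * I : ℂ)) h1
    (by fun_prop)

lemma H_cont : Continuous H := continuous_re.comp Hc_cont

lemma Hc_even (y : ℝ) : Hc (-y) = Hc y := by
  unfold Hc
  rw [← completedRiemannZeta_one_sub]
  congr 1
  push_cast
  ring

lemma H_even (y : ℝ) : H (-y) = H y := by rw [H, Hc_even, H]

lemma two_mul_aux (y : ℝ) : (2 : ℂ) * (1 / 4 + y * I) = 1 / 2 + 2 * y * I := by ring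

lemma Hc_real (y : ℝ) : Hc y = (H y : ℂ) := by
  have key : ∀ y : ℝ, 2 * Hc y = mellin (fun x : ℝ => Th (1 * x) - 1 - (1 : ℂ) ^ (-(1 / 2) : ℂ) *
      (x : ℂ) ^ (-(1 / 2) : ℂ)) (1 / 4 + y * I) := by
    intro y
    rw [(strip (z := 1) (by simp) (s := 1 / 4 + y * I) (by norm_num) (by norm_num)).2,
      two_mul_aux, Hc]
    simp
  have h : (starRingEnd ℂ) (2 * Hc y) = 2 * Hc (-y) := by
    rw [key, key, mellin, mellin, ← integral_conj]
    refine setIntegral_congr_fun measurableSet_Ioi fun x hx => ?_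
    have hx : 0 < x := hx
    have c : ∀ w : ℂ, (starRingEnd ℂ) ((x : ℂ) ^ w) = (x : ℂ) ^ ((starRingEnd ℂ) w) := by
      intro w
      have := cpow_conj (x : ℂ) w (by rw [arg_ofReal_of_nonneg hx.le]; exact Real.pi_pos.ne)
      rw [conj_ofReal] at this
      rw [this]
    have ct : (starRingEnd ℂ) (Th x) = Th x := by
      unfold Th
      rw [jacobiTheta_eq_jacobiTheta₂, jacobiTheta₂_conj]
      simp
    simp only [one_mul, one_cpow, smul_eq_mul, map_mul, map_sub, c, ct, map_one, map_neg, map_add,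
      map_div₀, map_ofNat, conj_I, conj_ofReal]
    push_cast
    congr 2
    ring
  rw [Hc_even, map_mul, map_ofNat] at h
  have h2 : (starRingEnd ℂ) (Hc y) = Hc y := by
    have : (2 : ℂ) ≠ 0 := by norm_num
    exact mul_left_cancel₀ this h
  exact (conj_eq_iff_re.mp h2).symm

lemma exp_cpow {φ : ℝ} (h1 : |φ| < Real.pi / 2) (w : ℂ) : (cexp (φ * I)) ^ w = cexp (φ * I * w) := by
  have := abs_lt.mp h1
  rw [cpow_def_of_ne_zero (Complex.exp_ne_zero _), log_exp]
  · simp; linarith [Real.pi_pos]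
  · simp; linarith [Real.pi_pos]

lemma re_exp_pos {φ : ℝ} (h1 : |φ| < Real.pi / 2) : 0 < (cexp (φ * I)).re := by
  have := abs_lt.mp h1
  rw [exp_ofReal_mul_I_re]
  exact Real.cos_pos_of_mem_Ioo ⟨by linarith, by linarith⟩

noncomputable def ff (φ : ℝ) (x : ℝ) : ℂ :=
  Th (cexp (φ * I) * x) - 1 - cexp (φ * I) ^ (-(1 / 2) : ℂ) * (x : ℂ) ^ (-(1 / 2) : ℂ)

lemma ff_mellin {φ : ℝ} (h1 : |φ| < Real.pi / 2) (y : ℝ) :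
    HasMellin (ff φ) (1 / 4 + y * I) (2 * cexp (-(φ * I / 4)) * (Real.exp (φ * y) * H y : ℝ)) := by
  have h := strip (re_exp_pos h1) (s := 1 / 4 + y * I) (by norm_num) (by norm_num)
  have e : 2 * cexp (-(φ * I / 4)) * ((Real.exp (φ * y) * H y : ℝ) : ℂ) = cexp (φ * I) ^ (-(1 / 4 + y * I) : ℂ) *
      (2 * completedRiemannZeta (2 * (1 / 4 + y * I))) := by
    rw [exp_cpow h1, two_mul_aux, ← Hc, Hc_real]
    push_cast
    have : cexp (φ * I * -(1 / 4 + y * I)) = cexp (-(φ * I / 4)) * cexp (φ * y) := by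
      rw [← Complex.exp_add]; congr 1
      linear_combination (-(φ : ℂ) * y) * I_sq
    rw [this]; ring
  rw [e]
  exact h

lemma H_bound {φ : ℝ} (h1 : |φ| < Real.pi / 2) : ∃ C : ℝ, ∀ y, Real.exp (φ * y) * |H y| ≤ C := by
  refine ⟨∫ x : ℝ in Ioi 0, ‖(x : ℂ) ^ ((1 / 4 : ℂ) - 1) • ff φ x‖, fun y => ?_⟩
  have h := (ff_mellin h1 y).2
  have h2 : ‖mellin (ff φ) (1 / 4 + y * I)‖ ≤ ∫ x : ℝ in Ioi 0, ‖(x : ℂ) ^ ((1 / 4 : ℂ) - 1) • ff φ x‖ := by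
    rw [mellin]
    refine (norm_integral_le_integral_norm _).trans (le_of_eq ?_)
    refine setIntegral_congr_fun measurableSet_Ioi fun x hx => ?_
    simp only [norm_smul]
    rw [norm_cpow_eq_rpow_re_of_pos hx, norm_cpow_eq_rpow_re_of_pos hx]
    simp
  rw [h] at h2
  refine le_trans ?_ h2
  rw [norm_mul, norm_mul, norm_real, Real.norm_eq_abs, abs_mul, Real.abs_exp, Complex.norm_exp]
  simp
  have : 0 ≤ Real.exp (φ * y) * |H y| := by positivity
  linarith

lemma exp_abs_int {c : ℝ} (hc : 0 < c) : Integrable (fun y : ℝ => Real.exp (-c * |y|)) := by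
  have h1 : IntegrableOn (fun y : ℝ => Real.exp (-c * |y|)) (Ioi 0) :=
    (integrableOn_congr_fun (fun y (hy : 0 < y) => by simp only [abs_of_pos hy]) measurableSet_Ioi).mpr
      (integrableOn_exp_mul_Ioi (a := -c) (by linarith) 0)
  have h2 : IntegrableOn (fun y : ℝ => Real.exp (-c * |y|)) (Iic 0) :=
    (integrableOn_congr_fun (fun y (hy : y ≤ 0) => by simp only [abs_of_nonpos hy]; congr 1; ring)
      measurableSet_Iic).mpr (integrableOn_exp_mul_Iic (a := c) hc 0)
  have := h2.union h1
  rwa [Iic_union_Ioi, integrableOn_univ] at this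

lemma H_int {φ : ℝ} (h1 : |φ| < Real.pi / 2) : Integrable (fun y => Real.exp (φ * y) * H y) := by
  obtain ⟨ψ, hψ1, hψ2⟩ := exists_between h1
  have hψ0 : 0 ≤ ψ := (abs_nonneg φ).trans hψ1.le
  obtain ⟨C1, hC1⟩ := H_bound (φ := ψ) (by rwa [abs_of_nonneg hψ0])
  have hint : Integrable (fun y : ℝ => C1 * Real.exp (-(ψ - |φ|) * |y|)) := by
    refine Integrable.const_mul ?_ _
    exact exp_abs_int (by linarith)
  refine Integrable.mono' hint (by have := H_cont; fun_prop) (Eventually.of_forall fun y => ?_)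
  rw [Real.norm_eq_abs, abs_mul, Real.abs_exp]
  have hy : Real.exp (ψ * |y|) * |H y| ≤ C1 := by
    rcases abs_cases y with ⟨e, _⟩ | ⟨e, _⟩
    · rw [e]; exact hC1 y
    · rw [e, ← H_even y]; exact hC1 (-y)
  have h3 : Real.exp (φ * y) ≤ Real.exp (ψ * |y|) * Real.exp (-(ψ - |φ|) * |y|) := by
    rw [← Real.exp_add]
    apply Real.exp_le_exp.mpr
    have := (le_abs_self (φ * y)).trans_eq (abs_mul φ y)
    linarith
  calc _ ≤ Real.exp (ψ * |y|) * Real.exp (-(ψ - |φ|) * |y|) * |H y| := by gcongr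
    _ = Real.exp (ψ * |y|) * |H y| * Real.exp (-(ψ - |φ|) * |y|) := by ring
    _ ≤ _ := by gcongr

lemma H_integral {φ : ℝ} (h1 : |φ| < Real.pi / 2) :
    ((∫ y, Real.exp (φ * y) * H y : ℝ) : ℂ) =
      Real.pi * (cexp (φ * I / 4) * Th (cexp (φ * I)) - cexp (φ * I / 4) - cexp (-(φ * I / 4))) := by
  have hm := fun y : ℝ => (ff_mellin h1 y)
  have hc : ContinuousAt (ff φ) 1 := by
    unfold ff
    have a1 : ContinuousAt (fun x : ℝ => Th (cexp (φ * I) * x)) 1 :=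
      (Th_cont (re_exp_pos h1)).continuousAt (Ioi_mem_nhds one_pos)
    have a2 : ContinuousAt (fun x : ℝ => (x : ℂ) ^ (-(1 / 2) : ℂ)) 1 :=
      continuousAt_ofReal_cpow_const _ _ (Or.inr one_ne_zero)
    exact (a1.sub continuousAt_const).sub (a2.const_mul _)
  have hconv : MellinConvergent (ff φ) ((1 / 4 : ℝ) : ℂ) := by
    have := (hm 0).1
    simpa using this
  have e : ∀ y : ℝ, mellin (ff φ) (((1 / 4 : ℝ) : ℂ) + y * I) =
      2 * cexp (-(φ * I / 4)) * (Real.exp (φ * y) * H y : ℝ) := by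
    intro y
    rw [← (hm y).2]; push_cast; rfl
  have hv : VerticalIntegrable (mellin (ff φ)) (1 / 4 : ℝ) := by
    unfold VerticalIntegrable
    simp_rw [e]
    exact ((H_int h1).ofReal).const_mul _
  have h := mellinInv_mellin_eq (1 / 4) (ff φ) one_pos hconv hv hc
  rw [mellinInv] at h
  simp_rw [e] at h
  simp only [ofReal_one, one_cpow, one_smul] at h
  rw [integral_const_mul, integral_complex_ofReal] at h
  have e3 : ff φ 1 = Th (cexp (φ * I)) - 1 - cexp (-(φ * I / 2)) := by
    rw [ff, exp_cpow h1]; simp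
    congr 1
  rw [e3] at h
  have e4 : cexp (φ * I / 4) * cexp (-(φ * I / 4)) = 1 := by rw [← Complex.exp_add]; simp
  have e5 : cexp (φ * I / 4) * cexp (-(φ * I / 2)) = cexp (-(φ * I / 4)) := by
    rw [← Complex.exp_add]; congr 1; ring
  rw [real_smul] at h
  push_cast at h
  have hpi : (Real.pi : ℂ) ≠ 0 := by exact_mod_cast Real.pi_ne_zero
  have e6 : 1 / (2 * (Real.pi : ℂ)) * 2 = 1 / Real.pi := by field_simp
  generalize ((∫ y, Real.exp (φ * y) * H y : ℝ) : ℂ) = J at h ⊢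
  have h' : J / Real.pi * cexp (-(φ * I / 4)) = Th (cexp (φ * I)) - 1 - cexp (-(φ * I / 2)) := by
    rw [← h]; field_simp
  have : J / Real.pi = cexp (φ * I / 4) * (Th (cexp (φ * I)) - 1 - cexp (-(φ * I / 2))) := by
    rw [← h']; linear_combination (-(J / Real.pi)) * e4
  rw [div_eq_iff hpi] at this
  rw [this]
  linear_combination -(Real.pi : ℂ) * e5



lemma theta_dup {τ : ℂ} (hτ : 0 < τ.im) :
    jacobiTheta τ + jacobiTheta (τ + 1) = 2 * jacobiTheta (4 * τ) := by
  have hs : ∀ {τ : ℂ}, 0 < τ.im → HasSum (fun n : ℤ => cexp (Real.pi * I * (n : ℂ) ^ 2 * τ)) (jacobiTheta τ) := by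
    intro τ hτ
    have := hasSum_jacobiTheta₂_term 0 hτ
    simpa [jacobiTheta₂_term, ← jacobiTheta_eq_jacobiTheta₂] using this
  have h1 := (hs hτ).add (hs (τ := τ + 1) (by simpa using hτ))
  have h4 := (hs (τ := 4 * τ) (by simpa using hτ)).mul_left 2
  have hinj : Function.Injective (fun n : ℤ => 2 * n) := fun a b h => by simpa using h
  rw [← hinj.hasSum_iff] at h1
  · refine h1.unique ?_
    refine (congrArg (fun f : ℤ → ℂ => HasSum f (2 * jacobiTheta (4 * τ))) (funext fun n => ?_)).mpr h4
    have : cexp (Real.pi * I * ((2 * n : ℤ) : ℂ) ^ 2 * (τ + 1)) =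
        cexp (Real.pi * I * ((2 * n : ℤ) : ℂ) ^ 2 * τ) * cexp (((2 * n ^ 2 : ℤ) : ℂ) * (2 * Real.pi * I)) := by
      rw [← Complex.exp_add]; congr 1; push_cast; ring
    simp only [Function.comp_apply]
    rw [this, exp_int_mul_two_pi_mul_I, mul_one, ← two_mul]
    congr 2
    push_cast; ring
  · intro n hn
    have hodd : Odd n := by
      rw [← Int.not_even_iff_odd]
      rintro ⟨k, hk⟩
      exact hn ⟨k, by simp; omega⟩
    obtain ⟨k, rfl⟩ := hodd
    have : cexp (Real.pi * I * ((2 * k + 1 : ℤ) : ℂ) ^ 2 * (τ + 1)) =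
        cexp (Real.pi * I * ((2 * k + 1 : ℤ) : ℂ) ^ 2 * τ) * (cexp (((2 * k ^ 2 + 2 * k : ℤ) : ℂ) * (2 * Real.pi * I)) * cexp (Real.pi * I)) := by
      rw [← Complex.exp_add, ← Complex.exp_add]; congr 1; push_cast; ring
    rw [this, exp_int_mul_two_pi_mul_I, exp_pi_mul_I]; ring

lemma Th_I_add {w : ℂ} (hw : 0 < w.re) : Th (I + w) = 2 * Th (4 * w) - Th w := by
  have h := theta_dup (τ := I * w) (by simpa using hw)
  have h2 := jacobiTheta_two_add (I * w - 1)
  unfold Th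
  have e1 : I * (I + w) = I * w - 1 := by linear_combination I_sq
  have e2 : I * (4 * w) = 4 * (I * w) := by ring
  have e3 : 2 + (I * w - 1) = I * w + 1 := by ring
  rw [e3] at h2
  rw [e1, e2, ← h2]
  linear_combination h

lemma Th_I_add' {w : ℂ} (hw : 0 < w.re) :
    Th (I + w) = (w⁻¹) ^ (1 / 2 : ℂ) * (Th (((1 / 4 : ℝ) : ℂ) * w⁻¹) - Th w⁻¹) := by
  have hw0 : w ≠ 0 := by rintro rfl; simp at hw
  have hwi := inv_re_pos hw
  have h1 := Th_feq hwi
  have h2 := Th_feq (z := ((1 / 4 : ℝ) : ℂ) * w⁻¹) (by rw [re_ofReal_mul]; positivity)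
  rw [ofReal_mul_cpow' (by norm_num) (inv_ne_zero hw0)] at h2
  have e1 : 1 / w⁻¹ = w := by simp
  have e2 : 1 / (((1 / 4 : ℝ) : ℂ) * w⁻¹) = 4 * w := by push_cast; field_simp
  have e3 : ((1 / 4 : ℝ) : ℂ) ^ (1 / 2 : ℂ) = 1 / 2 := by
    have : ((1 / 4 : ℝ) : ℂ) ^ (((1 / 2 : ℝ)) : ℂ) = (((1 / 4 : ℝ) ^ (1 / 2 : ℝ) : ℝ) : ℂ) :=
      (ofReal_cpow (by norm_num) _).symm
    have e : (1 / 4 : ℝ) ^ (1 / 2 : ℝ) = 1 / 2 := by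
      rw [← Real.sqrt_eq_rpow, show (1 / 4 : ℝ) = (1 / 2) ^ 2 by norm_num]
      exact Real.sqrt_sq (by norm_num)
    rw [e] at this
    push_cast at this ⊢
    exact this
  rw [e1] at h1
  rw [e2, e3] at h2
  rw [Th_I_add hw, h1, h2]
  ring

lemma Th_small {δ : ℝ} (h0 : 0 < δ) (h1 : δ ≤ 1 / 4) :
    ‖Th (cexp ((Real.pi / 2 - δ : ℝ) * I))‖ ≤
      2 / δ * (4 / (1 - Real.exp (-Real.pi / 4)) * Real.exp (-(1 / 4) * δ⁻¹)) := by
  set w : ℂ := ((2 * Real.sin (δ / 2) : ℝ) : ℂ) * cexp (((-(δ / 2) : ℝ) : ℂ) * I) with hw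
  have hsin : 0 < Real.sin (δ / 2) :=
    Real.sin_pos_of_pos_of_lt_pi (by linarith) (by linarith [Real.pi_gt_three])
  have hsin1 : Real.sin (δ / 2) ≤ δ / 2 := Real.sin_le (by linarith)
  have hsin2 : δ / 4 ≤ Real.sin (δ / 2) := by
    have := Real.mul_le_sin (x := δ / 2) (by linarith) (by linarith [Real.pi_gt_three])
    refine le_trans ?_ this
    have : 1 / 2 ≤ 2 / Real.pi := by
      rw [div_le_div_iff₀ (by norm_num) Real.pi_pos]; linarith [Real.pi_le_four]
    nlinarith
  have hcos : 1 / 2 ≤ Real.cos (δ / 2) := by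
    have := Real.one_sub_sq_div_two_le_cos (x := δ / 2)
    nlinarith
  have hz : cexp ((Real.pi / 2 - δ : ℝ) * I) = I + w := by
    have hs : ((2 * Real.sin (δ / 2) : ℝ) : ℂ) = (cexp (-(δ / 2 : ℂ) * I) - cexp ((δ / 2 : ℂ) * I)) * I := by
      push_cast; rw [Complex.sin]; ring
    have e1 : cexp ((Real.pi / 2 - δ : ℝ) * I) = I * cexp (-δ * I) := by
      have : (((Real.pi / 2 - δ : ℝ) : ℂ) * I) = Real.pi / 2 * I + -δ * I := by push_cast; ring
      rw [this, Complex.exp_add, exp_pi_div_two_mul_I]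
    have e2 : cexp (-δ * I) = cexp (-(δ / 2 : ℂ) * I) * cexp (-(δ / 2 : ℂ) * I) := by
      rw [← Complex.exp_add]; congr 1; ring
    have e3 : cexp ((δ / 2 : ℂ) * I) * cexp (-(δ / 2 : ℂ) * I) = 1 := by
      rw [← Complex.exp_add]; simp
    rw [hw, hs, e1, e2]
    push_cast
    linear_combination I * e3
  have hwi : w⁻¹ = (((2 * Real.sin (δ / 2))⁻¹ : ℝ) : ℂ) * cexp (((δ / 2 : ℝ) : ℂ) * I) := by
    rw [hw, mul_inv, ← Complex.exp_neg, ofReal_inv]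
    congr 2
    push_cast; ring
  have hwre : 0 < w.re := by
    rw [hw, re_ofReal_mul, exp_ofReal_mul_I_re, Real.cos_neg]
    have : 0 < Real.cos (δ / 2) := by linarith
    positivity
  have hwire : 1 / (2 * δ) ≤ (w⁻¹).re := by
    rw [hwi, re_ofReal_mul, exp_ofReal_mul_I_re]
    have : δ⁻¹ ≤ (2 * Real.sin (δ / 2))⁻¹ := inv_anti₀ (by positivity) (by linarith)
    calc 1 / (2 * δ) = δ⁻¹ * (1 / 2) := by field_simp
      _ ≤ _ := mul_le_mul this hcos (by norm_num) (by positivity)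
  have hwin : ‖w⁻¹‖ ≤ 2 / δ := by
    rw [hwi, norm_mul, norm_exp_ofReal_mul_I, norm_real, mul_one, Real.norm_of_nonneg (by positivity)]
    calc (2 * Real.sin (δ / 2))⁻¹ ≤ (δ / 2)⁻¹ := inv_anti₀ (by positivity) (by linarith)
      _ = _ := by field_simp
  have hsq : ‖(w⁻¹) ^ (1 / 2 : ℂ)‖ ≤ 2 / δ := by
    have h2δ : 1 ≤ 2 / δ := by rw [le_div_iff₀ h0]; linarith
    have e : ‖(w⁻¹) ^ (1 / 2 : ℂ)‖ ^ 2 = ‖w⁻¹‖ := by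
      rw [← norm_pow]
      congr 1
      have := cpow_nat_inv_pow (w⁻¹) (n := 2) (by norm_num)
      simpa using this
    have hn := norm_nonneg ((w⁻¹) ^ (1 / 2 : ℂ))
    nlinarith
  have hr2 : 1 ≤ 1 / (2 * δ) / 2 := by
    rw [div_div, le_div_iff₀ (by positivity)]; linarith
  have hr : 1 ≤ (w⁻¹).re := by linarith
  set r := (w⁻¹).re with hrdef
  have hpi := Real.pi_gt_three
  have K0 : 0 < 1 - Real.exp (-Real.pi / 4) := by
    have : Real.exp (-Real.pi / 4) < 1 := Real.exp_lt_one_iff.mpr (by linarith)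
    linarith
  have bd : ∀ u : ℂ, r / 4 ≤ u.re → ‖Th u - 1‖ ≤
      2 / (1 - Real.exp (-Real.pi / 4)) * Real.exp (-(1 / 4) * δ⁻¹) := by
    intro u hu
    have hu0 : 0 < u.re := by linarith
    refine (Th_sub_one_le hu0).trans ?_
    have a1 : Real.exp (-Real.pi * u.re) ≤ Real.exp (-Real.pi / 4) :=
      Real.exp_le_exp.mpr (by nlinarith)
    have a2 : Real.exp (-Real.pi * u.re) ≤ Real.exp (-(1 / 4) * δ⁻¹) := by
      apply Real.exp_le_exp.mpr
      have : 1 / (2 * δ) = δ⁻¹ / 2 := by field_simp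
      have hi : 0 < δ⁻¹ := by positivity
      nlinarith
    gcongr
  rw [hz, Th_I_add' hwre, norm_mul]
  have b1 := bd (((1 / 4 : ℝ) : ℂ) * w⁻¹) (by rw [re_ofReal_mul]; linarith)
  have b2 := bd w⁻¹ (by linarith)
  have b3 : ‖Th (((1 / 4 : ℝ) : ℂ) * w⁻¹) - Th w⁻¹‖ ≤
      4 / (1 - Real.exp (-Real.pi / 4)) * Real.exp (-(1 / 4) * δ⁻¹) := by
    calc _ = ‖(Th (((1 / 4 : ℝ) : ℂ) * w⁻¹) - 1) - (Th w⁻¹ - 1)‖ := by congr 1; ring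
      _ ≤ _ := norm_sub_le _ _
      _ ≤ _ := add_le_add b1 b2
      _ = _ := by ring
  gcongr

lemma Th_flat (N : ℕ) : Tendsto (fun δ : ℝ => ‖Th (cexp ((Real.pi / 2 - δ : ℝ) * I))‖ / δ ^ N)
    (𝓝[>] 0) (𝓝 0) := by
  have h := (tendsto_rpow_mul_exp_neg_mul_atTop_nhds_zero ((N + 1 : ℕ) : ℝ) (1 / 4) (by norm_num)).comp
    tendsto_inv_nhdsGT_zero
  have h2 := h.const_mul (2 * (4 / (1 - Real.exp (-Real.pi / 4))))
  rw [mul_zero] at h2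
  refine squeeze_zero' ?_ ?_ h2
  · filter_upwards [self_mem_nhdsWithin] with δ hδ
    have : 0 < δ := hδ
    positivity
  · have h4 : ∀ᶠ δ : ℝ in 𝓝[>] 0, δ ≤ 1 / 4 := nhdsWithin_le_nhds (eventually_le_nhds (by norm_num))
    filter_upwards [self_mem_nhdsWithin, h4] with δ hδ hδ4
    have hδ : 0 < δ := hδ
    rw [div_le_iff₀ (by positivity)]
    refine (Th_small hδ hδ4).trans (le_of_eq ?_)
    simp only [Function.comp_apply, Real.rpow_natCast]
    have e : (δ⁻¹) ^ (N + 1) * δ ^ N = 1 / δ := by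
      rw [inv_pow, pow_succ]; field_simp
    calc _ = 1 / δ * (2 * (4 / (1 - Real.exp (-Real.pi / 4)) * Real.exp (-(1 / 4) * δ⁻¹))) := by ring
      _ = _ := by rw [← e]; ring

lemma Th_flat_mul (N : ℕ) {m : ℝ} (hm : 0 < m) :
    Tendsto (fun δ : ℝ => ‖Th (cexp ((Real.pi / 2 - m * δ : ℝ) * I))‖ / δ ^ N) (𝓝[>] 0) (𝓝 0) := by
  have ht : Tendsto (fun δ : ℝ => m * δ) (𝓝[>] 0) (𝓝[>] 0) := by
    refine tendsto_nhdsWithin_iff.mpr ⟨?_, ?_⟩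
    · have : Tendsto (fun δ : ℝ => m * δ) (𝓝 0) (𝓝 (m * 0)) := (continuous_const.mul continuous_id).tendsto 0
      rw [mul_zero] at this
      exact this.mono_left nhdsWithin_le_nhds
    · filter_upwards [self_mem_nhdsWithin] with δ hδ
      exact mul_pos hm hδ
  have h := ((Th_flat N).comp ht).const_mul (m ^ N)
  rw [mul_zero] at h
  refine h.congr' ?_
  filter_upwards [self_mem_nhdsWithin] with δ hδ
  have hδ : 0 < δ := hδ
  simp only [Function.comp_apply, mul_pow]
  field_simp



lemma one_sub_pow' {R : Type*} [CommRing R] (x : R) (n : ℕ) :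
    (1 - x) ^ n = ∑ j ∈ Finset.range (n + 1), (-1) ^ j * (n.choose j : R) * x ^ j := by
  have := add_pow (-x) 1 n
  rw [show -x + 1 = 1 - x by ring] at this
  rw [this]
  refine Finset.sum_congr rfl fun j _ => ?_
  rw [neg_pow]; ring

/-- The integrand of the finite difference. -/
noncomputable def FD (k : ℕ) (δ y : ℝ) : ℝ :=
  Real.exp ((Real.pi / 2 - δ) * y) * (1 - Real.exp (-(δ * y))) ^ (2 * k) * H y

lemma FD_eq (k : ℕ) (δ y : ℝ) : FD k δ y = ∑ j ∈ Finset.range (2 * k + 1),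
    (-1) ^ j * ((2 * k).choose j : ℝ) * (Real.exp ((Real.pi / 2 - ((j : ℝ) + 1) * δ) * y) * H y) := by
  rw [FD, one_sub_pow', Finset.mul_sum, Finset.sum_mul]
  refine Finset.sum_congr rfl fun j _ => ?_
  have : Real.exp ((Real.pi / 2 - ((j : ℝ) + 1) * δ) * y) =
      Real.exp ((Real.pi / 2 - δ) * y) * Real.exp (-(δ * y)) ^ j := by
    rw [← Real.exp_nat_mul, ← Real.exp_add]; congr 1; ring
  rw [this]; ring

lemma phi_lt {k j : ℕ} {δ : ℝ} (h0 : 0 < δ) (h1 : (2 * k + 1) * δ < 3)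
    (hj : j ∈ Finset.range (2 * k + 1)) : |Real.pi / 2 - ((j : ℝ) + 1) * δ| < Real.pi / 2 := by
  have hj' : (j : ℝ) ≤ 2 * k := by
    have := Finset.mem_range.mp hj
    exact_mod_cast (by omega : j ≤ 2 * k)
  have hpi := Real.pi_gt_three
  have hj0 : (0 : ℝ) ≤ j := by positivity
  rw [abs_lt]
  constructor <;> nlinarith

lemma FD_int (k : ℕ) {δ : ℝ} (h0 : 0 < δ) (h1 : (2 * k + 1) * δ < 3) : Integrable (FD k δ) := by
  have : FD k δ = fun y => ∑ j ∈ Finset.range (2 * k + 1),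
    (-1) ^ j * ((2 * k).choose j : ℝ) * (Real.exp ((Real.pi / 2 - ((j : ℝ) + 1) * δ) * y) * H y) :=
    funext fun y => FD_eq k δ y
  rw [this]
  exact integrable_finsetSum _ fun j hj => (H_int (phi_lt h0 h1 hj)).const_mul _

lemma FD_integral (k : ℕ) {δ : ℝ} (h0 : 0 < δ) (h1 : (2 * k + 1) * δ < 3) :
    ((∫ y, FD k δ y : ℝ) : ℂ) = Real.pi * (∑ j ∈ Finset.range (2 * k + 1),
      (-1) ^ j * ((2 * k).choose j : ℂ) * (cexp ((Real.pi / 2 - ((j : ℝ) + 1) * δ : ℝ) * I / 4) *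
        Th (cexp ((Real.pi / 2 - ((j : ℝ) + 1) * δ : ℝ) * I)))
      - cexp ((Real.pi / 2 - δ : ℝ) * I / 4) * (1 - cexp (-(δ / 4 : ℝ) * I)) ^ (2 * k)
      - cexp (-((Real.pi / 2 - δ : ℝ) * I / 4)) * (1 - cexp ((δ / 4 : ℝ) * I)) ^ (2 * k)) := by
  simp_rw [FD_eq]
  rw [integral_finsetSum _ fun j hj => (H_int (phi_lt h0 h1 hj)).const_mul _]
  simp_rw [integral_const_mul]
  rw [ofReal_sum, one_sub_pow', one_sub_pow', Finset.mul_sum, Finset.mul_sum,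
    ← Finset.sum_sub_distrib, ← Finset.sum_sub_distrib, Finset.mul_sum]
  refine Finset.sum_congr rfl fun j hj => ?_
  rw [ofReal_mul, H_integral (phi_lt h0 h1 hj)]
  have e1 : cexp ((Real.pi / 2 - ((j : ℝ) + 1) * δ : ℝ) * I / 4) =
      cexp ((Real.pi / 2 - δ : ℝ) * I / 4) * cexp (-(δ / 4 : ℝ) * I) ^ j := by
    rw [← Complex.exp_nat_mul, ← Complex.exp_add]; congr 1; push_cast; ring
  have e2 : cexp (-((Real.pi / 2 - ((j : ℝ) + 1) * δ : ℝ) * I / 4)) =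
      cexp (-((Real.pi / 2 - δ : ℝ) * I / 4)) * cexp ((δ / 4 : ℝ) * I) ^ j := by
    rw [← Complex.exp_nat_mul, ← Complex.exp_add]; congr 1; push_cast; ring
  rw [e2, e1, ofReal_mul, ofReal_pow, ofReal_neg, ofReal_one, ofReal_natCast]
  ring

lemma norm_one_sub_exp {x : ℝ} : ‖1 - cexp (x * I)‖ ≤ |x| := by
  rw [norm_sub_rev, mul_comm]
  exact Real.norm_exp_I_mul_ofReal_sub_one_le

lemma FD_bound (k : ℕ) : ∀ᶠ δ : ℝ in 𝓝[>] 0, |∫ y, FD k δ y| ≤ 12 * δ ^ (2 * k) := by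
  have hT : Tendsto (fun δ : ℝ => ∑ j ∈ Finset.range (2 * k + 1), ((2 * k).choose j : ℝ) *
      (‖Th (cexp ((Real.pi / 2 - ((j : ℝ) + 1) * δ : ℝ) * I))‖ / δ ^ (2 * k))) (𝓝[>] 0) (𝓝 0) := by
    have := tendsto_finsetSum (Finset.range (2 * k + 1)) fun j _ =>
      (Th_flat_mul (2 * k) (m := (j : ℝ) + 1) (by positivity)).const_mul ((2 * k).choose j : ℝ)
    simpa using this
  have h3 : ∀ᶠ δ : ℝ in 𝓝[>] 0, δ < 3 / (2 * k + 1) :=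
    nhdsWithin_le_nhds (eventually_lt_nhds (by positivity))
  filter_upwards [hT.eventually_le_const one_pos, h3, self_mem_nhdsWithin] with δ hδ hδ3 h0
  have h0 : 0 < δ := h0
  have h1 : (2 * k + 1) * δ < 3 := by rwa [lt_div_iff₀' (by positivity)] at hδ3
  have hp : 0 < δ ^ (2 * k) := by positivity
  rw [← Real.norm_eq_abs, ← norm_real, FD_integral k h0 h1, norm_mul, norm_real, Real.norm_of_nonneg Real.pi_pos.le]
  have b1 : ‖∑ j ∈ Finset.range (2 * k + 1),
      (-1) ^ j * ((2 * k).choose j : ℂ) * (cexp ((Real.pi / 2 - ((j : ℝ) + 1) * δ : ℝ) * I / 4) *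
        Th (cexp ((Real.pi / 2 - ((j : ℝ) + 1) * δ : ℝ) * I)))‖ ≤ δ ^ (2 * k) := by
    simp_rw [← mul_div_assoc] at hδ
    rw [← Finset.sum_div, div_le_one hp] at hδ
    refine (norm_sum_le _ _).trans (le_trans (le_of_eq ?_) hδ)
    refine Finset.sum_congr rfl fun j _ => ?_
    have : ‖cexp ((Real.pi / 2 - ((j : ℝ) + 1) * δ : ℝ) * I / 4)‖ = 1 := by
      have := norm_exp_ofReal_mul_I ((Real.pi / 2 - ((j : ℝ) + 1) * δ) / 4)
      refine Eq.trans ?_ this; congr 2; push_cast; ring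
    rw [norm_mul, norm_mul, norm_mul, this]; simp
  have q : ∀ x : ℝ, |x| ≤ δ → ‖1 - cexp (x * I)‖ ^ (2 * k) ≤ δ ^ (2 * k) := fun x hx =>
    pow_le_pow_left₀ (norm_nonneg _) (norm_one_sub_exp.trans hx) _
  have b2 : ‖cexp ((Real.pi / 2 - δ : ℝ) * I / 4) * (1 - cexp (-(δ / 4 : ℝ) * I)) ^ (2 * k)‖ ≤ δ ^ (2 * k) := by
    have : ‖cexp ((Real.pi / 2 - δ : ℝ) * I / 4)‖ = 1 := by
      have := norm_exp_ofReal_mul_I ((Real.pi / 2 - δ) / 4)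
      refine Eq.trans ?_ this; congr 2; push_cast; ring
    rw [norm_mul, norm_pow, this, one_mul]
    have := q (-(δ / 4)) (by rw [abs_neg, abs_of_pos (by positivity)]; linarith)
    rwa [ofReal_neg] at this
  have b3 : ‖cexp (-((Real.pi / 2 - δ : ℝ) * I / 4)) * (1 - cexp ((δ / 4 : ℝ) * I)) ^ (2 * k)‖ ≤ δ ^ (2 * k) := by
    have : ‖cexp (-((Real.pi / 2 - δ : ℝ) * I / 4))‖ = 1 := by
      have := norm_exp_ofReal_mul_I (-(Real.pi / 2 - δ) / 4)
      refine Eq.trans ?_ this; congr 2; push_cast; ring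
    rw [norm_mul, norm_pow, this, one_mul]
    exact q (δ / 4) (by rw [abs_of_pos (by positivity)]; linarith)
  have := norm_sub_le_of_le (norm_sub_le_of_le b1 b2) b3
  calc _ ≤ Real.pi * (δ ^ (2 * k) + δ ^ (2 * k) + δ ^ (2 * k)) := by
        gcongr
    _ ≤ 4 * (δ ^ (2 * k) + δ ^ (2 * k) + δ ^ (2 * k)) := by
        gcongr
        exact Real.pi_le_four
    _ = _ := by ring



lemma pos_far {g : ℝ → ℝ} (hg : Continuous g) (hev : ∀ y, g (-y) = g y) {T : ℝ} (hT : 0 ≤ T)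
    (hne : ∀ y, T ≤ |y| → g y ≠ 0) (h0 : 0 < g T) : ∀ y, T ≤ |y| → 0 < g y := by
  have key : ∀ y, T ≤ y → 0 < g y := by
    intro y hy
    by_contra hcon
    push Not at hcon
    obtain ⟨c, hc, hc0⟩ := intermediate_value_Icc' hy hg.continuousOn (show (0 : ℝ) ∈ Icc (g y) (g T) from ⟨hcon, h0.le⟩)
    exact hne c (hc.1.trans (le_abs_self c)) hc0
  intro y hy
  rcases abs_cases y with ⟨h, _⟩ | ⟨h, _⟩
  · exact key y (h ▸ hy)
  · rw [← hev]; exact key _ (h ▸ hy)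

lemma sign_far {T : ℝ} (hT : 0 ≤ T) (hne : ∀ y, T ≤ |y| → H y ≠ 0) :
    ∃ s : ℝ, |s| = 1 ∧ ∀ y, T ≤ |y| → 0 < s * H y := by
  rcases (hne T (le_abs_self T)).lt_or_gt with h | h
  · refine ⟨-1, by simp, pos_far (g := fun y => -1 * H y) (continuous_const.mul H_cont)
      (fun y => by simp [H_even]) hT (fun y hy => by simpa using hne y hy) (by simpa using h)⟩
  · refine ⟨1, by simp, pos_far (g := fun y => 1 * H y) (continuous_const.mul H_cont)
      (fun y => by simp [H_even]) hT (fun y hy => by simpa using hne y hy) (by simpa using h)⟩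

lemma main_ineq {T s : ℝ} (hT : 1 ≤ T) (hs : |s| = 1) (hpos : ∀ y, T ≤ |y| → 0 < s * H y)
    (k : ℕ) {δ : ℝ} (h0 : 0 < δ) (h1 : (2 * k + 1) * δ < 3) (h2 : δ * (2 * T + 1) ≤ 1 / 4) :
    (∫ y in Icc (2 * T) (2 * T + 1), |H y|) * (3 / 2 * T * δ) ^ (2 * k)
      - Real.exp (2 * T) * (∫ y in Icc (-T) T, |H y|) * (5 / 4 * T * δ) ^ (2 * k) ≤
    |∫ y, FD k δ y| := by
  have hpi := Real.pi_gt_three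
  have hpi4 := Real.pi_le_four
  have hδ1 : δ ≤ 1 / 4 := by nlinarith
  have hδT : δ * T ≤ 1 / 4 := by nlinarith
  have hT0 : 0 < T := by linarith
  have habs : Continuous fun y => |H y| := H_cont.abs
  have hi1 : IntegrableOn (fun y => (3 / 2 * T * δ) ^ (2 * k) * |H y|) (Icc (2 * T) (2 * T + 1)) :=
    (continuous_const.mul habs).continuousOn.integrableOn_Icc
  have hi2 : IntegrableOn (fun y => (Real.exp (2 * T) * (5 / 4 * T * δ) ^ (2 * k)) * |H y|) (Icc (-T) T) :=
    (continuous_const.mul habs).continuousOn.integrableOn_Icc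
  have hj1 := hi1.integrable_indicator measurableSet_Icc
  have hj2 := hi2.integrable_indicator measurableSet_Icc
  have hm : ∫ y, ((Icc (2 * T) (2 * T + 1)).indicator (fun y => (3 / 2 * T * δ) ^ (2 * k) * |H y|) y -
      (Icc (-T) T).indicator (fun y => (Real.exp (2 * T) * (5 / 4 * T * δ) ^ (2 * k)) * |H y|) y) ≤
      ∫ y, s * FD k δ y := by
    refine integral_mono (hj1.sub hj2) ((FD_int k h0 h1).const_mul s) fun y => ?_
    have hW : 0 ≤ (1 - Real.exp (-(δ * y))) ^ (2 * k) := (even_two_mul k).pow_nonneg _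
    have hE := Real.exp_pos ((Real.pi / 2 - δ) * y)
    have hFD : s * FD k δ y = Real.exp ((Real.pi / 2 - δ) * y) * (1 - Real.exp (-(δ * y))) ^ (2 * k) * (s * H y) := by
      rw [FD]; ring
    have hsH : |s * H y| = |H y| := by rw [abs_mul, hs, one_mul]
    by_cases ha : y ∈ Icc (-T) T
    · have hb : y ∉ Icc (2 * T) (2 * T + 1) := fun h => by linarith [h.1, ha.2]
      simp only [indicator_of_mem ha, indicator_of_notMem hb, zero_sub]
      rw [hFD]
      have hya : |y| ≤ T := abs_le.mpr ha
      have c1 : (1 - Real.exp (-(δ * y))) ^ (2 * k) ≤ (5 / 4 * T * δ) ^ (2 * k) := by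
        rw [← (even_two_mul k).pow_abs]
        refine pow_le_pow_left₀ (abs_nonneg _) ?_ _
        have hx : |-(δ * y)| ≤ δ * T := by
          rw [abs_neg, abs_mul, abs_of_pos h0]; gcongr
        have h := Real.abs_exp_sub_one_sub_id_le (x := -(δ * y)) (by linarith)
        have hsq : (-(δ * y)) ^ 2 ≤ (δ * T) ^ 2 := by
          rw [← sq_abs]; exact pow_le_pow_left₀ (abs_nonneg _) hx 2
        rw [abs_le] at h hx ⊢
        have hpT : 0 < δ * T := by positivity
        constructor <;> nlinarith
      have c2 : Real.exp ((Real.pi / 2 - δ) * y) ≤ Real.exp (2 * T) := by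
        apply Real.exp_le_exp.mpr
        calc (Real.pi / 2 - δ) * y ≤ (Real.pi / 2 - δ) * T := by
              apply mul_le_mul_of_nonneg_left ha.2; linarith
          _ ≤ _ := by nlinarith
      have c3 : Real.exp ((Real.pi / 2 - δ) * y) * (1 - Real.exp (-(δ * y))) ^ (2 * k) ≤
        Real.exp (2 * T) * (5 / 4 * T * δ) ^ (2 * k) := mul_le_mul c2 c1 hW (Real.exp_pos _).le
      have c4 : -|H y| ≤ s * H y := by rw [← hsH]; exact neg_abs_le _
      have c5 : 0 ≤ Real.exp ((Real.pi / 2 - δ) * y) * (1 - Real.exp (-(δ * y))) ^ (2 * k) := by positivity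
      nlinarith [abs_nonneg (H y), mul_le_mul_of_nonneg_left c4 c5, mul_le_mul_of_nonneg_right c3 (abs_nonneg (H y))]
    · have hyT : T ≤ |y| := by
        by_contra hcon
        push Not at hcon
        exact ha (abs_le.mp hcon.le)
      have hp := hpos y hyT
      simp only [indicator_of_notMem ha, sub_zero]
      by_cases hb : y ∈ Icc (2 * T) (2 * T + 1)
      · simp only [indicator_of_mem hb]
        rw [hFD, ← hsH, abs_of_pos hp]
        refine mul_le_mul_of_nonneg_right ?_ hp.le
        have hy0 : 0 < y := by linarith [hb.1]
        have c1 : (3 / 2 * T * δ) ^ (2 * k) ≤ (1 - Real.exp (-(δ * y))) ^ (2 * k) := by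
          refine pow_le_pow_left₀ (by positivity) ?_ _
          have hu : δ * y ≤ 1 / 4 := le_trans (by gcongr; exact hb.2) h2
          have hu0 : 0 < δ * y := by positivity
          have hu2 : δ * (2 * T) ≤ δ * y := by gcongr; exact hb.1
          have h := Real.abs_exp_sub_one_sub_id_le (x := -(δ * y)) (by rw [abs_neg, abs_of_pos hu0]; linarith)
          rw [abs_le] at h
          nlinarith
        have c2 : 1 ≤ Real.exp ((Real.pi / 2 - δ) * y) := by
          apply Real.one_le_exp
          apply mul_nonneg _ hy0.le; linarith
        nlinarith
      · simp only [indicator_of_notMem hb]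
        rw [hFD]
        exact mul_nonneg (mul_nonneg hE.le hW) hp.le
  rw [integral_sub hj1 hj2, integral_indicator measurableSet_Icc, integral_indicator measurableSet_Icc,
    integral_const_mul, integral_const_mul, integral_const_mul] at hm
  have : s * ∫ y, FD k δ y ≤ |∫ y, FD k δ y| := by
    refine (le_abs_self _).trans ?_
    rw [abs_mul, hs, one_mul]
  linarith

lemma no_far {T : ℝ} (hT : 1 ≤ T) (hne : ∀ y, T ≤ |y| → H y ≠ 0) : False := by
  obtain ⟨s, hs, hpos⟩ := sign_far (by linarith) hne
  set B := ∫ y in Icc (2 * T) (2 * T + 1), |H y| with hB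
  set A := Real.exp (2 * T) * ∫ y in Icc (-T) T, |H y| with hA
  have hA0 : 0 ≤ A := mul_nonneg (Real.exp_pos _).le (integral_nonneg fun y => abs_nonneg _)
  have hB0 : 0 < B := by
    rw [hB, integral_Icc_eq_integral_Ioc, ← intervalIntegral.integral_of_le (by linarith)]
    refine intervalIntegral.intervalIntegral_pos_of_pos_on (H_cont.abs.intervalIntegrable _ _) ?_ (by linarith)
    intro y hy
    exact abs_pos.mpr (hne y (le_trans (by linarith [hy.1]) (le_abs_self y)))
  have key : ∀ k : ℕ, B * (36 / 25 : ℝ) ^ k ≤ 12 + A := by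
    intro k
    have h3 : ∀ᶠ δ : ℝ in 𝓝[>] 0, δ < 3 / (2 * k + 1) :=
      nhdsWithin_le_nhds (eventually_lt_nhds (by positivity))
    have h4 : ∀ᶠ δ : ℝ in 𝓝[>] 0, δ < (1 / 4) / (2 * T + 1) :=
      nhdsWithin_le_nhds (eventually_lt_nhds (by positivity))
    obtain ⟨δ, hδ, hδ3, hδ4, h0⟩ := ((FD_bound k).and (h3.and (h4.and self_mem_nhdsWithin))).exists
    have h0 : 0 < δ := h0
    rw [lt_div_iff₀' (by positivity)] at hδ3
    rw [lt_div_iff₀ (by positivity)] at hδ4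
    have h := (main_ineq hT hs hpos k h0 hδ3 hδ4.le).trans hδ
    rw [← hB, ← hA] at h
    have e1 : (3 / 2 * T * δ) ^ (2 * k) = (36 / 25 : ℝ) ^ k * ((5 / 4 * T) ^ (2 * k) * δ ^ (2 * k)) := by
      rw [show (36 / 25 : ℝ) = (6 / 5) ^ 2 by norm_num, ← pow_mul, ← mul_pow, ← mul_pow]; congr 1; ring
    rw [e1, mul_pow (5 / 4 * T) δ] at h
    have hQ : 1 ≤ (5 / 4 * T) ^ (2 * k) := one_le_pow₀ (by linarith)
    have hR : 0 < δ ^ (2 * k) := by positivity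
    have hQR : 0 < (5 / 4 * T) ^ (2 * k) * δ ^ (2 * k) := by positivity
    have h5 : δ ^ (2 * k) ≤ (5 / 4 * T) ^ (2 * k) * δ ^ (2 * k) := le_mul_of_one_le_left hR.le hQ
    refine le_of_mul_le_mul_right ?_ hQR
    nlinarith
  obtain ⟨k, hk⟩ := pow_unbounded_of_one_lt ((12 + A) / B) (show (1 : ℝ) < 36 / 25 by norm_num)
  have := key k
  rw [div_lt_iff₀' hB0] at hk
  linarith

end HardyAux

end HardySection

/-- The Riemann zeta function has infinitely many zeros on the critical line. -/
theorem infinite_zeros_on_critical_line :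
    {t : ℝ | riemannZeta (1 / 2 + t * Complex.I) = 0}.Infinite := by
  intro hfin
  obtain ⟨M, hM⟩ := hfin.isBounded.exists_norm_le
  refine HardyAux.no_far (T := |M| + 1) (by linarith [abs_nonneg M]) fun y hy h0 => ?_
  have hz : HardyAux.Hc y = 0 := by rw [HardyAux.Hc_real, h0]; simp
  have hmem : (2 * y) ∈ {t : ℝ | riemannZeta (1 / 2 + t * Complex.I) = 0} := by
    simp only [Set.mem_setOf_eq]
    have hne : (1 / 2 + ((2 * y : ℝ) : ℂ) * Complex.I) ≠ 0 := by
      intro h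
      have := congrArg Complex.re h
      simp at this
    rw [riemannZeta_def_of_ne_zero hne]
    rw [HardyAux.Hc] at hz
    have e : (1 / 2 + ((2 * y : ℝ) : ℂ) * Complex.I) = 1 / 2 + 2 * y * Complex.I := by push_cast; ring
    rw [e, hz, zero_div]
  have := hM _ hmem
  rw [Real.norm_eq_abs, abs_mul, abs_two] at this
  linarith [le_abs_self M, abs_nonneg M]
end
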